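/- arXiv:1805.01303 — 9 statements merged into one kernel-verified Lean document; each statement's English description precedes it below -/
import Mathlib

section
/- Let V be a 2-dimensional complex vector space equipped with a symplectic form ω (a nondegenerate alternating bilinear form), and let L : V → V be a linear operator. Then L is nilpotent if and only if there exists a vector u ∈ V such that L v = ω(u,v) • u for all v ∈ V. -/
/-!
An endomorphism `v ↦ ω(u, v) u` squares to zero because `ω(u, u) = 0`. Conversely, a nilpotent
endomorphism `L` of a plane satisfies `L² = 0`. Three vectors of a plane are related by
`ω(x, y) z + ω(y, z) x + ω(z, x) y = 0`; applying `L` to this relation for `x = L w`, `y = w`,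
`z = v` gives `ω(L w, w) L v = ω(L w, v) L w`. If `L w ≠ 0`, nondegeneracy forces
`ω(L w, w) ≠ 0`, so `L` is a scalar multiple of `v ↦ ω(u, v) u` with `u = L w`, and a square root
of the scalar can be absorbed into `u`.
-/

open Module

section CommRing

variable {R M : Type*} [CommRing R] [AddCommGroup M] [Module R M]

/-- The symplectic square of a vector `u`: the endomorphism `v ↦ ω(u, v) u`, the normal form of a
nilpotent endomorphism of a symplectic plane. It is defined for every bilinear form `ω`. -/
def symplecticSquare (ω : LinearMap.BilinForm R M) (u : M) : End R M :=
  (ω u).smulRight u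

@[simp]
theorem symplecticSquare_apply (ω : LinearMap.BilinForm R M) (u v : M) :
    symplecticSquare ω u v = ω u v • u :=
  rfl

theorem symplecticSquare_smul (ω : LinearMap.BilinForm R M) (r : R) (u : M) :
    symplecticSquare ω (r • u) = (r * r) • symplecticSquare ω u := by
  ext v
  simp only [symplecticSquare_apply, map_smul, LinearMap.smul_apply, smul_eq_mul]
  module

theorem symplecticSquare_sq_eq_zero {ω : LinearMap.BilinForm R M} {u : M} (hu : ω u u = 0) :
    symplecticSquare ω u ^ 2 = 0 := by
  ext v
  simp [pow_two, hu]

theorem isAlt_cyclic_sum_smul_eq_zero {ω : LinearMap.BilinForm R M} (hω : ω.IsAlt)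
    (b : Basis (Fin 2) R M) (x y z : M) :
    ω x y • z + ω y z • x + ω z x • y = 0 := by
  have hswap : ω (b 1) (b 0) = -ω (b 0) (b 1) := (hω.neg_eq _ _).symm
  rw [← b.sum_repr x, ← b.sum_repr y, ← b.sum_repr z]
  simp only [Fin.sum_univ_two, map_add, map_smul, LinearMap.add_apply, LinearMap.smul_apply,
    smul_eq_mul, hω.self_eq_zero, hswap]
  module

theorem pow_finrank_eq_zero_of_isNilpotent [IsDomain R] [Module.Finite R M] [Free R M]
    {f : End R M} (hf : IsNilpotent f) : f ^ finrank R M = 0 := by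
  simpa [hf.charpoly_eq_X_pow_finrank] using f.aeval_self_charpoly

theorem smul_eq_symplecticSquare_of_sq_eq_zero {ω : LinearMap.BilinForm R M} (hω : ω.IsAlt)
    (b : Basis (Fin 2) R M) {L : End R M} (hL : L ^ 2 = 0) (w : M) :
    ω (L w) w • L = symplecticSquare ω (L w) := by
  have hLL : L (L w) = 0 := by simpa [pow_two] using LinearMap.congr_fun hL w
  ext v
  have hcyclic : ω (L w) w • L v + ω v (L w) • L w = 0 := by
    simpa [hLL] using congrArg L (isAlt_cyclic_sum_smul_eq_zero hω b (L w) w v)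
  calc ω (L w) w • L v = -(ω v (L w) • L w) := eq_neg_of_add_eq_zero_left hcyclic
    _ = ω (L w) v • L w := by rw [← neg_smul, hω.neg_eq]

end CommRing

section Field

variable {K V : Type*} [Field K] [AddCommGroup V] [Module K V]

theorem exists_eq_smul_symplecticSquare_of_isNilpotent {ω : LinearMap.BilinForm K V} (hω : ω.IsAlt)
    (hsep : ω.SeparatingLeft) (hdim : finrank K V = 2) {L : End K V} (hL : IsNilpotent L) :
    ∃ (c : K) (u : V), L = c • symplecticSquare ω u := by
  obtain rfl | hL0 := eq_or_ne L 0
  · exact ⟨0, 0, (zero_smul K _).symm⟩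
  have : FiniteDimensional K V := .of_finrank_pos (by lia)
  obtain ⟨w, hw⟩ : ∃ w, L w ≠ 0 := DFunLike.ne_iff.mp hL0
  have hsq : ω (L w) w • L = symplecticSquare ω (L w) :=
    smul_eq_symplecticSquare_of_sq_eq_zero hω (finBasisOfFinrankEq K V hdim)
      (hdim ▸ pow_finrank_eq_zero_of_isNilpotent hL) w
  have hc : ω (L w) w ≠ 0 := by
    refine fun hc ↦ hw (hsep (L w) fun v ↦ ?_)
    have hv : ω (L w) v • L w = 0 := by
      rw [← symplecticSquare_apply, ← hsq, hc, zero_smul, LinearMap.zero_apply]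
    exact (smul_eq_zero.mp hv).resolve_right hw
  exact ⟨(ω (L w) w)⁻¹, L w, (eq_inv_smul_iff₀ hc).mpr hsq⟩

theorem nilpotent_iff_exists_symplectic_square_general (hK : ∀ a : K, IsSquare a)
    (hdim : finrank K V = 2) {ω : LinearMap.BilinForm K V} (hω : ω.IsAlt)
    (hnd : ω.Nondegenerate) (L : End K V) :
    IsNilpotent L ↔ ∃ u : V, ∀ v : V, L v = ω u v • u := by
  constructor
  · intro hL
    obtain ⟨c, u, rfl⟩ := exists_eq_smul_symplecticSquare_of_isNilpotent hω hnd.1 hdim hL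
    obtain ⟨s, rfl⟩ := hK c
    exact ⟨s • u, LinearMap.congr_fun (symplecticSquare_smul ω s u).symm⟩
  · rintro ⟨u, hu⟩
    have hLu : L = symplecticSquare ω u := LinearMap.ext hu
    exact ⟨2, hLu ▸ symplecticSquare_sq_eq_zero (hω.self_eq_zero u)⟩

end Field

/-- Let `V` be a 2-dimensional complex vector space equipped with a
symplectic form `ω` (a nondegenerate alternating bilinear form), and let `L : V → V`
be a linear operator. Then `L` is nilpotent if and only if there exists `u ∈ V` such
that `L v = ω(u,v) • u` for all `v ∈ V`. -/
theorem nilpotent_iff_exists_symplectic_square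
    (V : Type*) [AddCommGroup V] [Module ℂ V]
    (hdim : Module.finrank ℂ V = 2)
    (ω : LinearMap.BilinForm ℂ V)
    (halt : ∀ v : V, ω v v = 0)
    (hnd : ω.Nondegenerate)
    (L : V →ₗ[ℂ] V) :
    IsNilpotent L ↔ ∃ u : V, ∀ v : V, L v = ω u v • u :=
  nilpotent_iff_exists_symplectic_square_general IsAlgClosed.exists_eq_mul_self hdim halt hnd L
end

section
/- Let p ∈ ℝ⁴ be a covector with η^{αβ} p_α p_β = 0 and p₄ > 0, and let u ∈ ℂ⁴ be a vector with u_α u^α = 0, u_α ū^α > 0, and p_α u^α = 0, where u_α = η_{αβ} u^β. For θ ∈ ℝ define the real 4×4 matrix D by D^α{}_β = δ^α{}_β + Re( i u^α p_β e^{iθ} ). Then det D = 1, and the strain matrix S defined by S^α{}_β = η^{αγ} (D^μ{}_γ η_{μν} D^ν{}_β) − δ^α{}_β satisfies S³ = 0; in particular all four elementary symmetric polynomials of the eigenvalues of S vanish. -/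
/-!
Write `D = 1 + N` with `N = v ⊗ p` and `v = Re (i e^{iθ} u)`. Since `p · v = 0`, `det D = 1` and
`N² = 0`. The metric adjoint `M = η⁻¹ Nᵀ η` also squares to zero, and `N M = 0` because `p` is
lightlike. Hence the strain `S = (1 + M)(1 + N) - 1 = M + N + M N` satisfies `S² = M N` and
`S³ = 0`. The trace, the determinant and the trace of the adjugate of a nilpotent matrix are
nilpotent, so over `ℝ` they vanish.
-/

open Matrix Complex

theorem one_add_mul_one_add_sub_one_pow_three {R : Type*} [Ring R] {a b : R}
    (ha : a * a = 0) (hb : b * b = 0) (hba : b * a = 0) :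
    ((1 + a) * (1 + b) - 1) ^ 3 = 0 := by
  have expand : (1 + a) * (1 + b) - 1 = a + b + a * b := by noncomm_ring
  have hb_mul : b * (a + b + a * b) = 0 := by
    rw [mul_add, mul_add, ← mul_assoc, hba, hb, zero_mul, add_zero, add_zero]
  have ha_mul : a * (a + b + a * b) = a * b := by
    rw [mul_add, mul_add, ← mul_assoc, ha, zero_mul, zero_add, add_zero]
  have square : (a + b + a * b) * (a + b + a * b) = a * b := by
    rw [add_mul, add_mul, mul_assoc a b, ha_mul, hb_mul, mul_zero, add_zero, add_zero]
  rw [expand, pow_succ, pow_two, square, mul_assoc, hb_mul, mul_zero]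

section CommRing

variable {n R : Type*} [Fintype n] [DecidableEq n] [CommRing R]

theorem isNilpotent_adjugate_of_isNilpotent [Nontrivial n] {A : Matrix n n R}
    (hA : IsNilpotent A) : IsNilpotent A.adjugate := by
  obtain ⟨k, hk⟩ := hA
  exact ⟨k, by rw [← adjugate_pow, hk, adjugate_zero]⟩

theorem isNilpotent_det_of_isNilpotent [Nonempty n] {A : Matrix n n R}
    (hA : IsNilpotent A) : IsNilpotent A.det := by
  obtain ⟨k, hk⟩ := hA
  exact ⟨k, by rw [← det_pow, hk, det_zero]⟩

theorem det_one_add_vecMulVec (v p : n → R) : (1 + vecMulVec v p).det = 1 + p ⬝ᵥ v := by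
  rw [vecMulVec_eq Unit, det_one_add_replicateCol_mul_replicateRow]

/-- The strain `S^α{}_β = g^{αγ} D^μ{}_γ g_{μν} D^ν{}_β - δ^α{}_β` of a deformation `D`. The metric
`g` and its inverse `gInv` are separate arguments, as are `g_{μν}` and `g^{αγ}` in index
notation. -/
def strain (g gInv D : Matrix n n R) : Matrix n n R :=
  gInv * Dᵀ * g * D - 1

variable {g gInv : Matrix n n R}

theorem strain_one_add_pow_three (hg : g * gInv = 1) {N : Matrix n n R}
    (hN : N * N = 0) (hN_adjoint : N * gInv * Nᵀ = 0) : strain g gInv (1 + N) ^ 3 = 0 := by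
  have hstrain : strain g gInv (1 + N) = (1 + gInv * Nᵀ * g) * (1 + N) - 1 := by
    rw [strain, transpose_add, transpose_one, mul_add gInv, mul_one, add_mul gInv,
      mul_eq_one_comm.mp hg]
  have hadjoint_sq : gInv * Nᵀ * g * (gInv * Nᵀ * g) = 0 := calc
    _ = gInv * Nᵀ * (g * gInv) * Nᵀ * g := by simp only [Matrix.mul_assoc]
    _ = gInv * (N * N)ᵀ * g := by rw [hg, mul_one, transpose_mul, ← Matrix.mul_assoc]
    _ = 0 := by rw [hN, transpose_zero, mul_zero, zero_mul]
  have hmul_adjoint : N * (gInv * Nᵀ * g) = 0 := by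
    rw [← Matrix.mul_assoc, ← Matrix.mul_assoc, hN_adjoint, zero_mul]
  rw [hstrain]
  exact one_add_mul_one_add_sub_one_pow_three hadjoint_sq hN hmul_adjoint

theorem strain_one_add_vecMulVec_pow_three (hg : g * gInv = 1) {p v : n → R}
    (hp : p ⬝ᵥ gInv *ᵥ p = 0) (hpv : p ⬝ᵥ v = 0) :
    strain g gInv (1 + vecMulVec v p) ^ 3 = 0 := by
  apply strain_one_add_pow_three hg
  · rw [vecMulVec_mul_vecMulVec, hpv, zero_smul, vecMulVec_zero]
  · rw [vecMulVec_mul, transpose_vecMulVec, vecMulVec_mul_vecMulVec, ← dotProduct_mulVec, hp,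
      zero_smul, vecMulVec_zero]

end CommRing

section PlaneWave

variable {n : Type*}

/-- The derivative `v^α = Re (i u^α e^{iθ})` of the plane wave displacement `Re (u^α e^{iθ})` with
respect to the phase `θ`. For the phase `θ = p_β x^β` the displacement gradient is `v ⊗ p`. -/
noncomputable def planeWavePhaseDeriv (u : n → ℂ) (θ : ℝ) : n → ℝ :=
  fun α => (I * u α * exp (θ * I)).re

theorem vecMulVec_planeWavePhaseDeriv_apply (u : n → ℂ) (θ : ℝ) (p : n → ℝ) (α β : n) :
    vecMulVec (planeWavePhaseDeriv u θ) p α β = (I * u α * (p β : ℂ) * exp (θ * I)).re := by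
  rw [vecMulVec_apply, planeWavePhaseDeriv, mul_right_comm _ (p β : ℂ), re_mul_ofReal]

theorem dotProduct_planeWavePhaseDeriv [Fintype n] (p : n → ℝ) (u : n → ℂ) (θ : ℝ) :
    p ⬝ᵥ planeWavePhaseDeriv u θ = (I * (∑ α, (p α : ℂ) * u α) * exp (θ * I)).re := by
  simp only [dotProduct, planeWavePhaseDeriv, Finset.mul_sum, Finset.sum_mul, re_sum,
    ← re_ofReal_mul]
  exact Finset.sum_congr rfl fun α _ => by ring_nf

end PlaneWave

theorem massless_solution_volume_preserving_and_strain_nilpotent_general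
    {n : Type*} [Fintype n] [DecidableEq n] [Nontrivial n]
    {g gInv : Matrix n n ℝ} (hg : g * gInv = 1)
    {p : n → ℝ} (hp : p ⬝ᵥ gInv *ᵥ p = 0)
    {u : n → ℂ} (hpu : ∑ α, (p α : ℂ) * u α = 0)
    (θ : ℝ) {D : Matrix n n ℝ}
    (hD : ∀ α β, D α β =
      (if α = β then 1 else 0) + (I * u α * (p β : ℂ) * exp (θ * I)).re)
    {S : Matrix n n ℝ} (hS : S = gInv * Dᵀ * g * D - 1) :
    D.det = 1 ∧ S ^ 3 = 0 ∧
      S.trace = 0 ∧ (1 / 2 : ℝ) * (S.trace ^ 2 - (S * S).trace) = 0 ∧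
      S.adjugate.trace = 0 ∧ S.det = 0 := by
  have hD_rankOne : D = 1 + vecMulVec (planeWavePhaseDeriv u θ) p := by
    ext α β
    rw [hD, Matrix.add_apply, one_apply, vecMulVec_planeWavePhaseDeriv_apply]
  have hpv : p ⬝ᵥ planeWavePhaseDeriv u θ = 0 := by
    rw [dotProduct_planeWavePhaseDeriv, hpu, mul_zero, zero_mul, zero_re]
  have hS_cube : S ^ 3 = 0 := by
    rw [hS, ← strain, hD_rankOne, strain_one_add_vecMulVec_pow_three hg hp hpv]
  have hS_nil : IsNilpotent S := ⟨3, hS_cube⟩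
  have htrace : S.trace = 0 := (isNilpotent_trace_of_isNilpotent hS_nil).eq_zero
  have htrace_sq : (S * S).trace = 0 :=
    (isNilpotent_trace_of_isNilpotent ((Commute.refl S).isNilpotent_mul_left hS_nil)).eq_zero
  refine ⟨?_, hS_cube, htrace, ?_, ?_, (isNilpotent_det_of_isNilpotent hS_nil).eq_zero⟩
  · rw [hD_rankOne, det_one_add_vecMulVec, hpv, add_zero]
  · rw [htrace, htrace_sq, zero_pow two_ne_zero, sub_zero, mul_zero]
  · exact (isNilpotent_trace_of_isNilpotent (isNilpotent_adjugate_of_isNilpotent hS_nil)).eq_zero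

theorem diagonal_minkowski_mul_self {R : Type*} [CommRing R] :
    (diagonal ![1, 1, 1, -1] : Matrix (Fin 4) (Fin 4) R) * diagonal ![1, 1, 1, -1] = 1 := by
  rw [diagonal_mul_diagonal, ← diagonal_one]
  congr 1
  ext i
  fin_cases i <;> simp

theorem dotProduct_minkowski_mulVec_self {R : Type*} [CommRing R] (p : Fin 4 → R) :
    p ⬝ᵥ diagonal ![1, 1, 1, -1] *ᵥ p = p 0 ^ 2 + p 1 ^ 2 + p 2 ^ 2 - p 3 ^ 2 := by
  simp only [dotProduct, mulVec_diagonal, Fin.sum_univ_four, cons_val_zero, cons_val_one,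
    cons_val]
  ring

/-- Let `p ∈ ℝ⁴` be a lightlike covector (`η^{αβ} p_α p_β = 0`, `p₄ > 0`)
and let `u ∈ ℂ⁴` be isotropic (`u_α u^α = 0`, `u_α ū^α > 0`) and orthogonal to `p`
(`p_α u^α = 0`).  For `θ ∈ ℝ` define `D^α{}_β = δ^α{}_β + Re(i u^α p_β e^{iθ})`.
Then `det D = 1` and the strain matrix `S^α{}_β = η^{αγ}(D^μ{}_γ η_{μν} D^ν{}_β) − δ^α{}_β`
satisfies `S³ = 0`; in particular all four elementary symmetric polynomials of the
eigenvalues of `S` vanish. -/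
theorem massless_solution_volume_preserving_and_strain_nilpotent
    (p : Fin 4 → ℝ)
    (hp_null : p 0 ^ 2 + p 1 ^ 2 + p 2 ^ 2 - p 3 ^ 2 = 0)
    (hp_fwd : 0 < p 3)
    (u : Fin 4 → ℂ)
    (hu_null : u 0 ^ 2 + u 1 ^ 2 + u 2 ^ 2 - u 3 ^ 2 = 0)
    (hu_pos : 0 < normSq (u 0) + normSq (u 1) + normSq (u 2) - normSq (u 3))
    (hpu : (p 0 : ℂ) * u 0 + (p 1 : ℂ) * u 1 + (p 2 : ℂ) * u 2 + (p 3 : ℂ) * u 3 = 0)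
    (θ : ℝ)
    (η : Matrix (Fin 4) (Fin 4) ℝ)
    (hη : η = Matrix.diagonal ![1, 1, 1, -1])
    (D : Matrix (Fin 4) (Fin 4) ℝ)
    (hD : ∀ α β : Fin 4, D α β =
      (if α = β then 1 else 0) + (Complex.I * u α * (p β : ℂ) * Complex.exp (θ * Complex.I)).re)
    (S : Matrix (Fin 4) (Fin 4) ℝ)
    (hS : S = η * Dᵀ * η * D - 1) :
    D.det = 1 ∧ S ^ 3 = 0 ∧
      S.trace = 0 ∧ (1 / 2 : ℝ) * (S.trace ^ 2 - (S * S).trace) = 0 ∧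
      S.adjugate.trace = 0 ∧ S.det = 0 := by
  subst hη
  exact massless_solution_volume_preserving_and_strain_nilpotent_general
    diagonal_minkowski_mul_self ((dotProduct_minkowski_mulVec_self p).trans hp_null)
    ((Fin.sum_univ_four _).trans hpu) θ hD hS
end

section
/- Let a ∈ ℝ with a ≠ 0, let θ ∈ ℝ, and let ε = ±1. Define the real 4×4 matrix S = [[0, 0, −a sin θ, −a sin θ], [0, 0, ε a cos θ, ε a cos θ], [−a sin θ, ε a cos θ, a², a²], [a sin θ, −ε a cos θ, −a², −a²]]. Then S³ = 0 and S² ≠ 0, i.e. S is nilpotent with nilpotency index exactly three. -/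
/-!
Write `k = (0, 0, 1, -1)` for the null direction of propagation, `κ = (0, 0, 1, 1)` for the covector
obtained from it by lowering the index, `p = (x, y, 0, 0)` for the transverse polarization and
`π = (x, y, c, c)` for the corresponding covector plus the quadratic term `c κ`. Then the strain is
`p ⊗ κ + k ⊗ π`. As `κ` annihilates both `k` and `p`, and `π` annihilates `k`, the only product of
two summands that survives is `(k ⊗ π)(p ⊗ κ)`. Hence the square is `(x² + y²) k ⊗ κ`, which gives
zero when multiplied by `p ⊗ κ + k ⊗ π` once more.
-/

section NullDyad

open Matrix

variable {n R : Type*} [Fintype n] [DecidableEq n] [Semiring R] {p k κ π : n → R}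

theorem vecMulVec_add_vecMulVec_sq (hκp : κ ⬝ᵥ p = 0) (hκk : κ ⬝ᵥ k = 0) (hπk : π ⬝ᵥ k = 0) :
    (vecMulVec p κ + vecMulVec k π) ^ 2 = vecMulVec k ((π ⬝ᵥ p) • κ) := by
  simp [sq, add_mul, mul_add, vecMulVec_mul_vecMulVec, hκp, hκk, hπk]

theorem vecMulVec_add_vecMulVec_pow_three_eq_zero
    (hκp : κ ⬝ᵥ p = 0) (hκk : κ ⬝ᵥ k = 0) (hπk : π ⬝ᵥ k = 0) :
    (vecMulVec p κ + vecMulVec k π) ^ 3 = 0 := by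
  rw [pow_succ, vecMulVec_add_vecMulVec_sq hκp hκk hπk]
  simp [mul_add, vecMulVec_mul_vecMulVec, hκp, hκk]

end NullDyad

theorem strain_eq_vecMulVec_add_vecMulVec {R : Type*} [Ring R] (x y c : R) :
    !![0, 0, x, x; 0, 0, y, y; x, y, c, c; -x, -y, -c, -c] =
      Matrix.vecMulVec ![x, y, 0, 0] ![0, 0, 1, 1] +
        Matrix.vecMulVec ![0, 0, 1, -1] ![x, y, c, c] := by
  ext i j
  fin_cases i <;> fin_cases j <;> simp

theorem massless_strain_nilpotent_of_index_three_general {R : Type*} [Ring R]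
    (x y c : R) (hxy : x ^ 2 + y ^ 2 ≠ 0) (S : Matrix (Fin 4) (Fin 4) R)
    (hS : S = !![0, 0, x, x; 0, 0, y, y; x, y, c, c; -x, -y, -c, -c]) :
    S ^ 3 = 0 ∧ S ^ 2 ≠ 0 := by
  have hκp : ![0, 0, 1, 1] ⬝ᵥ ![x, y, 0, 0] = 0 := by simp
  have hκk : ![0, 0, 1, 1] ⬝ᵥ ![0, 0, 1, (-1 : R)] = 0 := by simp
  have hπk : ![x, y, c, c] ⬝ᵥ ![0, 0, 1, -1] = 0 := by simp
  rw [hS, strain_eq_vecMulVec_add_vecMulVec]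
  refine ⟨vecMulVec_add_vecMulVec_pow_three_eq_zero hκp hκk hπk, fun hsq ↦ hxy ?_⟩
  rw [vecMulVec_add_vecMulVec_sq hκp hκk hπk] at hsq
  simpa [Matrix.vecMulVec_apply, sq] using congr_fun₂ hsq 2 2

theorem mul_sin_sq_add_mul_cos_sq_ne_zero {a b : ℝ} (ha : a ≠ 0) (hb : b ≠ 0) (θ : ℝ) :
    (a * Real.sin θ) ^ 2 + (b * Real.cos θ) ^ 2 ≠ 0 := by
  intro h
  obtain ⟨hsin, hcos⟩ : Real.sin θ = 0 ∧ Real.cos θ = 0 := by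
    simpa [sq, mul_self_add_mul_self_eq_zero, ha, hb] using h
  simpa [hsin, hcos] using Real.sin_sq_add_cos_sq θ

/-- Let `a ∈ ℝ`, `a ≠ 0`, `θ ∈ ℝ` and `ε = ±1`.  The strain matrix
`S = [[0, 0, −a sin θ, −a sin θ], [0, 0, εa cos θ, εa cos θ],
[−a sin θ, εa cos θ, a², a²], [a sin θ, −εa cos θ, −a², −a²]]` of the massless solution
satisfies `S³ = 0` and `S² ≠ 0`: it is nilpotent with nilpotency index exactly three. -/
theorem massless_strain_nilpotent_of_index_three
    (a : ℝ) (ha : a ≠ 0) (θ : ℝ) (ε : ℝ) (hε : ε = 1 ∨ ε = -1)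
    (S : Matrix (Fin 4) (Fin 4) ℝ)
    (hS : S = !![0, 0, -a * Real.sin θ, -a * Real.sin θ;
                 0, 0, ε * a * Real.cos θ, ε * a * Real.cos θ;
                 -a * Real.sin θ, ε * a * Real.cos θ, a ^ 2, a ^ 2;
                 a * Real.sin θ, -(ε * a * Real.cos θ), -a ^ 2, -a ^ 2]) :
    S ^ 3 = 0 ∧ S ^ 2 ≠ 0 := by
  have hε0 : ε ≠ 0 := by rcases hε with rfl | rfl <;> norm_num
  exact massless_strain_nilpotent_of_index_three_general _ _ _
    (mul_sin_sq_add_mul_cos_sq_ne_zero (neg_ne_zero.mpr ha) (mul_ne_zero hε0 ha) θ) S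
    (by simpa using hS)
end

section
/- Let p ∈ ℝ⁴ be a covector with η^{αβ} p_α p_β = 0 and p₄ > 0, and let u ∈ ℂ⁴ be a vector with u_α u^α = 0, u_α ū^α > 0, and p_α u^α = 0. For θ ∈ ℝ define the real 4×4 matrices D^α{}_β = δ^α{}_β + Re( i u^α p_β e^{iθ} ), U^α{}_β = δ^α{}_β − ½ Re[ i ( p^α u_β − u^α p_β ) e^{iθ} ] − (u_γ ū^γ / 16) p^α p_β, and V^α{}_β = δ^α{}_β + ½ Re[ i ( p^α u_β + u^α p_β ) e^{iθ} ] + (3 u_γ ū^γ / 16) p^α p_β. Then: (i) D^α{}_β = U^α{}_γ V^γ{}_β (matrix product); (ii) U is Lorentz-orthogonal, i.e. U^μ{}_α η_{μν} U^ν{}_β = η_{αβ}; (iii) V is Lorentz-symmetric, i.e. η_{αγ} V^γ{}_β = η_{βγ} V^γ{}_α. -/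
open Matrix Complex

/-!
Put `a^α = Re(i e^{iθ} u^α)`, let `A = a ⊗ p_♭`, so that `D = 1 + A`, and let `B = p^♯ ⊗ a_♭` be the
Lorentz adjoint of `A`. Since `p` is null and orthogonal to `a`, one has `A² = B² = AB = 0`, and
`BA = (a_γ a^γ) p^♯ ⊗ p_♭` with `a_γ a^γ = w / 2` because `u` is null. Hence `N = (A - B) / 2` is
skew-adjoint with `N² = -BA / 4` and `N³ = 0`, and `U = 1 + N + N² / 2` is its exponential, an
isometry. Likewise `S = (A + B) / 2` is self-adjoint with `S² = BA / 4`, and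
`V = 1 + S + 3 S² / 2` satisfies `U V = 1 + N + S = D`.
-/

section NilpotentPolar

variable (K : Type*) {R : Type*} [Field K] [Ring R] [Algebra K R]

/-- The isometric factor in the polar decomposition of `1 + A`, where `B` is the adjoint of `A`:
the exponential `1 + N + N² / 2` of `N = (A - B) / 2`, simplified by `A² = B² = AB = 0`. -/
def polarRotation (A B : R) : R :=
  1 + (1 / 2 : K) • (A - B) - (1 / 2 ^ 3 : K) • (B * A)

/-- The self-adjoint factor in the polar decomposition of `1 + A`, where `B` is the adjoint of `A`:
the square root `1 + S + 3 S² / 2` of `(1 + B) (1 + A)`, where `S = (A + B) / 2`, simplified by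
`A² = B² = AB = 0`. -/
def polarStretch (A B : R) : R :=
  1 + (1 / 2 : K) • (A + B) + (3 / 2 ^ 3 : K) • (B * A)

variable {A B : R} [NeZero (2 : K)]

lemma polarRotation_mul_polarStretch (hA : A * A = 0) (hB : B * B = 0) (hAB : A * B = 0) :
    polarRotation K A B * polarStretch K A B = 1 + A := by
  have htwo : (2 : K) ≠ 0 := two_ne_zero
  have hABX (X : R) : A * (B * X) = 0 := by rw [← mul_assoc, hAB, zero_mul]
  have hBBX (X : R) : B * (B * X) = 0 := by rw [← mul_assoc, hB, zero_mul]
  simp only [polarRotation, polarStretch, mul_add, add_mul, sub_mul, mul_one, one_mul,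
    smul_mul_assoc, mul_smul_comm, mul_assoc, hA, hB, hAB, hABX, hBBX, mul_zero]
  match_scalars <;> field_simp <;> norm_num

lemma polarRotation_neg_mul_polarRotation (hA : A * A = 0) (hB : B * B = 0) (hAB : A * B = 0) :
    polarRotation K (-A) (-B) * polarRotation K A B = 1 := by
  have htwo : (2 : K) ≠ 0 := two_ne_zero
  have hABX (X : R) : A * (B * X) = 0 := by rw [← mul_assoc, hAB, zero_mul]
  have hBBX (X : R) : B * (B * X) = 0 := by rw [← mul_assoc, hB, zero_mul]
  simp only [polarRotation, mul_add, add_mul, mul_sub, sub_mul, mul_one, one_mul, neg_mul, mul_neg,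
    smul_mul_assoc, mul_smul_comm, mul_assoc, hA, hB, hAB, hABX, hBBX, mul_zero]
  match_scalars <;> field_simp <;> norm_num

end NilpotentPolar

section RankOne

variable {R l m n o : Type*}

lemma vecMulVec_mul_vecMulVec_eq_zero [NonUnitalSemiring R] [Fintype m] (x : l → R) {y z : m → R}
    (t : o → R) (h : y ⬝ᵥ z = 0) : vecMulVec x y * vecMulVec z t = 0 := by
  rw [vecMulVec_mul_vecMulVec, h, zero_smul]
  exact Matrix.ext fun _ _ ↦ mul_zero _

lemma isAdjointPair_vecMulVec [CommRing R] [Fintype n] {η : Matrix n n R} (hη : η.IsSymm)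
    (x y : n → R) : η.IsAdjointPair η (vecMulVec x (η *ᵥ y)) (vecMulVec y (η *ᵥ x)) := by
  have hvecMul : x ᵥ* η = η *ᵥ x := by rw [← mulVec_transpose, hη.eq]
  rw [Matrix.IsAdjointPair, transpose_vecMulVec, vecMulVec_mul, mul_vecMulVec, hvecMul]

lemma isAdjointPair_mul [CommRing R] [Fintype n] {η A A' B B' : Matrix n n R}
    (hA : η.IsAdjointPair η A A') (hB : η.IsAdjointPair η B B') :
    η.IsAdjointPair η (A * B) (B' * A') := by
  rw [Matrix.IsAdjointPair] at hA hB ⊢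
  rw [transpose_mul, mul_assoc, hA, ← mul_assoc, hB, mul_assoc]

end RankOne

section PolarFactors

variable {n K : Type*} [Fintype n] [DecidableEq n] [Field K] {η A B : Matrix n n K}

lemma isAdjointPair_polarRotation (hAB : η.IsAdjointPair η A B) (hBA : η.IsAdjointPair η B A) :
    η.IsAdjointPair η (polarRotation K A B) (polarRotation K (-A) (-B)) := by
  have hmul := isAdjointPair_mul hBA hAB
  rw [Matrix.IsAdjointPair] at hAB hBA hmul ⊢
  simp only [polarRotation, transpose_add, transpose_sub, transpose_smul, transpose_one,
    add_mul, sub_mul, mul_add, mul_sub, smul_mul_assoc, mul_smul_comm, one_mul,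
    mul_one, mul_neg, neg_mul, neg_neg, hAB, hBA, hmul]
  module

lemma isSelfAdjoint_polarStretch (hAB : η.IsAdjointPair η A B) (hBA : η.IsAdjointPair η B A) :
    η.IsSelfAdjoint (polarStretch K A B) := by
  have hmul := isAdjointPair_mul hBA hAB
  rw [Matrix.IsAdjointPair] at hAB hBA hmul
  rw [Matrix.IsSelfAdjoint, Matrix.IsAdjointPair]
  simp only [polarStretch, transpose_add, transpose_smul, transpose_one, add_mul,
    mul_add, smul_mul_assoc, mul_smul_comm, one_mul, mul_one, hAB, hBA, hmul]
  module

lemma polarRotation_vecMulVec_apply (a p k b : n → K) (i j : n) :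
    polarRotation K (vecMulVec a p) (vecMulVec k b) i j = (if i = j then 1 else 0)
      - 1 / 2 * (k i * b j - a i * p j) - b ⬝ᵥ a / 8 * k i * p j := by
  simp only [polarRotation, Matrix.add_apply, Matrix.sub_apply, Matrix.smul_apply, one_apply,
    vecMulVec_mul_vecMulVec, vecMulVec_apply, Pi.smul_apply, smul_eq_mul]
  ring

lemma polarStretch_vecMulVec_apply (a p k b : n → K) (i j : n) :
    polarStretch K (vecMulVec a p) (vecMulVec k b) i j = (if i = j then 1 else 0)
      + 1 / 2 * (k i * b j + a i * p j) + 3 * (b ⬝ᵥ a) / 8 * k i * p j := by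
  simp only [polarStretch, Matrix.add_apply, Matrix.smul_apply, one_apply,
    vecMulVec_mul_vecMulVec, vecMulVec_apply, Pi.smul_apply, smul_eq_mul]
  ring

theorem polar_decomposition_one_add [NeZero (2 : K)] (hη : η.IsSymm)
    (hadj : η.IsAdjointPair η A B) (hadj' : η.IsAdjointPair η B A)
    (hA : A * A = 0) (hB : B * B = 0) (hAB : A * B = 0) :
    1 + A = polarRotation K A B * polarStretch K A B ∧
      (polarRotation K A B)ᵀ * η * polarRotation K A B = η ∧
      (η * polarStretch K A B)ᵀ = η * polarStretch K A B := by
  refine ⟨(polarRotation_mul_polarStretch K hA hB hAB).symm, ?_, ?_⟩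
  · rw [isAdjointPair_polarRotation hadj hadj', mul_assoc,
      polarRotation_neg_mul_polarRotation K hA hB hAB, mul_one]
  · rw [transpose_mul, hη.eq, isSelfAdjoint_polarStretch hadj hadj']

theorem polar_decomposition_one_add_vecMulVec [NeZero (2 : K)] (hη : η.IsSymm) {k a : n → K}
    (hkk : η *ᵥ k ⬝ᵥ k = 0) (hka : η *ᵥ k ⬝ᵥ a = 0) :
    let A := vecMulVec a (η *ᵥ k)
    let B := vecMulVec k (η *ᵥ a)
    1 + A = polarRotation K A B * polarStretch K A B ∧
      (polarRotation K A B)ᵀ * η * polarRotation K A B = η ∧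
      (η * polarStretch K A B)ᵀ = η * polarStretch K A B := by
  have hak : η *ᵥ a ⬝ᵥ k = 0 := by
    rw [dotProduct_comm, dotProduct_mulVec, ← mulVec_transpose, hη.eq, hka]
  exact polar_decomposition_one_add hη (isAdjointPair_vecMulVec hη a k)
    (isAdjointPair_vecMulVec hη k a) (vecMulVec_mul_vecMulVec_eq_zero _ _ hka)
    (vecMulVec_mul_vecMulVec_eq_zero _ _ hak) (vecMulVec_mul_vecMulVec_eq_zero _ _ hkk)

end PolarFactors

section Polarization

variable {n : Type*}

/-- The real part of a complex polarization vector `u` multiplied by the phase factor `ζ`. -/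
def realPolarization (ζ : ℂ) (u : n → ℂ) : n → ℝ := fun α ↦ (ζ * u α).re

variable [Fintype n]

lemma dotProduct_realPolarization (q : n → ℝ) (ζ : ℂ) (u : n → ℂ) :
    q ⬝ᵥ realPolarization ζ u = (ζ * (ofReal ∘ q ⬝ᵥ u)).re := by
  simp only [dotProduct, realPolarization, Function.comp_apply, Finset.mul_sum, re_sum,
    mul_left_comm ζ, re_ofReal_mul]

lemma mulVec_realPolarization {m : Type*} (M : Matrix m n ℝ) (ζ : ℂ) (u : n → ℂ) :
    M *ᵥ realPolarization ζ u = realPolarization ζ (M.map ofReal *ᵥ u) :=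
  funext fun i ↦ dotProduct_realPolarization (M i) ζ u

lemma realPolarization_dotProduct (ζ : ℂ) (u v : n → ℂ) :
    realPolarization ζ u ⬝ᵥ realPolarization ζ v =
      ((ζ ^ 2 * (u ⬝ᵥ v)).re + normSq ζ * (u ⬝ᵥ star v).re) / 2 := by
  simp only [dotProduct, realPolarization, Finset.mul_sum, re_sum, ← Finset.sum_add_distrib,
    Finset.sum_div]
  refine Finset.sum_congr rfl fun α _ ↦ ?_
  simp only [Pi.star_apply, star_def, pow_two, mul_re, mul_im, conj_re, conj_im, normSq_apply]
  ring

lemma realPolarization_dotProduct_of_dotProduct_eq_zero {ζ : ℂ} (hζ : ‖ζ‖ = 1) {u v : n → ℂ}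
    (huv : u ⬝ᵥ v = 0) :
    realPolarization ζ u ⬝ᵥ realPolarization ζ v = (u ⬝ᵥ star v).re / 2 := by
  rw [realPolarization_dotProduct, huv, normSq_eq_norm_sq, hζ]
  simp

end Polarization

theorem massless_deformation_gradient_polar_decomposition_general
    {n : Type*} [Fintype n] [DecidableEq n] {η : Matrix n n ℝ} (hη : η.IsSymm)
    {p pr : n → ℝ} (hp : p = η *ᵥ pr) (hp_null : p ⬝ᵥ pr = 0)
    {u ul : n → ℂ} (hul : ul = η.map ofReal *ᵥ u) (hu_null : ul ⬝ᵥ u = 0)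
    (hpu : ofReal ∘ p ⬝ᵥ u = 0) {w : ℝ} (hw : (w : ℂ) = ul ⬝ᵥ star u) (θ : ℝ)
    {D U V : Matrix n n ℝ}
    (hD : ∀ α β, D α β = (if α = β then 1 else 0) + (I * u α * (p β : ℂ) * exp (θ * I)).re)
    (hU : ∀ α β, U α β = (if α = β then 1 else 0)
      - (1 / 2 : ℝ) * (I * ((pr α : ℂ) * ul β - u α * (p β : ℂ)) * exp (θ * I)).re
      - w / 16 * pr α * p β)
    (hV : ∀ α β, V α β = (if α = β then 1 else 0)
      + (1 / 2 : ℝ) * (I * ((pr α : ℂ) * ul β + u α * (p β : ℂ)) * exp (θ * I)).re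
      + 3 * w / 16 * pr α * p β) :
    D = U * V ∧ Uᵀ * η * U = η ∧ (η * V)ᵀ = η * V := by
  set ζ : ℂ := I * exp (θ * I) with hζ
  set a := realPolarization ζ u with ha
  have hηa : η *ᵥ a = realPolarization ζ ul := by rw [hul, ha, mulVec_realPolarization]
  have hpa : p ⬝ᵥ a = 0 := by rw [ha, dotProduct_realPolarization, hpu, mul_zero, zero_re]
  have haa : η *ᵥ a ⬝ᵥ a = w / 2 := by
    have hζ_norm : ‖ζ‖ = 1 := by rw [hζ, norm_mul, norm_I, norm_exp_ofReal_mul_I, one_mul]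
    rw [hηa, realPolarization_dotProduct_of_dotProduct_eq_zero hζ_norm hu_null, ← hw,
      ofReal_re]
  have hre_up (α β : n) : (I * u α * (p β : ℂ) * exp (θ * I)).re = a α * p β := by
    rw [ha, realPolarization, ← re_mul_ofReal, hζ]
    ring_nf
  have hre_pu (α β : n) : (I * ((pr α : ℂ) * ul β) * exp (θ * I)).re = pr α * (η *ᵥ a) β := by
    rw [hηa, realPolarization, ← re_ofReal_mul, hζ]
    ring_nf
  have hD' : D = 1 + vecMulVec a p := by
    ext α β
    rw [hD, hre_up, Matrix.add_apply, one_apply, vecMulVec_apply]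
  have hU' : U = polarRotation ℝ (vecMulVec a p) (vecMulVec pr (η *ᵥ a)) := by
    ext α β
    rw [hU, mul_sub, sub_mul, sub_re, hre_pu, ← mul_assoc I, hre_up,
      polarRotation_vecMulVec_apply, haa]
    ring
  have hV' : V = polarStretch ℝ (vecMulVec a p) (vecMulVec pr (η *ᵥ a)) := by
    ext α β
    rw [hV, mul_add, add_mul, add_re, hre_pu, ← mul_assoc I, hre_up,
      polarStretch_vecMulVec_apply, haa]
    ring
  rw [hD', hU', hV', hp]
  exact polar_decomposition_one_add_vecMulVec hη (hp ▸ hp_null) (hp ▸ hpa)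

/-- Lorentzian polar decomposition of the deformation gradient of the
massless solution: with `D^α{}_β = δ^α{}_β + Re(i u^α p_β e^{iθ})`,
`U^α{}_β = δ^α{}_β − ½ Re[i(p^α u_β − u^α p_β)e^{iθ}] − (u_γ ū^γ/16) p^α p_β` and
`V^α{}_β = δ^α{}_β + ½ Re[i(p^α u_β + u^α p_β)e^{iθ}] + (3 u_γ ū^γ/16) p^α p_β`, one has
(i) `D = U V`; (ii) `U` is Lorentz-orthogonal, `U^μ{}_α η_{μν} U^ν{}_β = η_{αβ}`;
(iii) `V` is Lorentz-symmetric, `η_{αγ} V^γ{}_β = η_{βγ} V^γ{}_α`. -/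
theorem massless_deformation_gradient_polar_decomposition
    (p : Fin 4 → ℝ)
    (hp_null : p 0 ^ 2 + p 1 ^ 2 + p 2 ^ 2 - p 3 ^ 2 = 0)
    (hp_fwd : 0 < p 3)
    (u : Fin 4 → ℂ)
    (hu_null : u 0 ^ 2 + u 1 ^ 2 + u 2 ^ 2 - u 3 ^ 2 = 0)
    (hu_pos : 0 < normSq (u 0) + normSq (u 1) + normSq (u 2) - normSq (u 3))
    (hpu : (p 0 : ℂ) * u 0 + (p 1 : ℂ) * u 1 + (p 2 : ℂ) * u 2 + (p 3 : ℂ) * u 3 = 0)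
    (θ : ℝ)
    (η : Matrix (Fin 4) (Fin 4) ℝ)
    (hη : η = Matrix.diagonal ![1, 1, 1, -1])
    -- `pr` is the raised covector `p^α = η^{αβ} p_β`
    (pr : Fin 4 → ℝ) (hpr : pr = ![p 0, p 1, p 2, -p 3])
    -- `ul` is the lowered vector `u_β = η_{βγ} u^γ`
    (ul : Fin 4 → ℂ) (hul : ul = ![u 0, u 1, u 2, -u 3])
    -- `w` is the real scalar `u_γ ū^γ`
    (w : ℝ) (hw : w = normSq (u 0) + normSq (u 1) + normSq (u 2) - normSq (u 3))
    (D : Matrix (Fin 4) (Fin 4) ℝ)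
    (hD : ∀ α β : Fin 4, D α β =
      (if α = β then 1 else 0) + (Complex.I * u α * (p β : ℂ) * Complex.exp (θ * Complex.I)).re)
    (U : Matrix (Fin 4) (Fin 4) ℝ)
    (hU : ∀ α β : Fin 4, U α β =
      (if α = β then 1 else 0)
        - (1 / 2 : ℝ) * (Complex.I * ((pr α : ℂ) * ul β - u α * (p β : ℂ))
            * Complex.exp (θ * Complex.I)).re
        - w / 16 * pr α * p β)
    (V : Matrix (Fin 4) (Fin 4) ℝ)
    (hV : ∀ α β : Fin 4, V α β =
      (if α = β then 1 else 0)
        + (1 / 2 : ℝ) * (Complex.I * ((pr α : ℂ) * ul β + u α * (p β : ℂ))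
            * Complex.exp (θ * Complex.I)).re
        + 3 * w / 16 * pr α * p β) :
    D = U * V ∧ Uᵀ * η * U = η ∧ (η * V)ᵀ = η * V := by
  exact massless_deformation_gradient_polar_decomposition_general (hη ▸ isSymm_diagonal _)
    (funext fun α ↦ by fin_cases α <;> simp [hη, hpr, mulVec_diagonal])
    (by simpa [hpr, dotProduct, Fin.sum_univ_four, pow_two, sub_eq_add_neg] using hp_null)
    (funext fun α ↦ by fin_cases α <;> simp [hη, hul, diagonal_map, mulVec_diagonal])
    (by simpa [hul, dotProduct, Fin.sum_univ_four, pow_two, sub_eq_add_neg] using hu_null)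
    (by simpa [dotProduct, Fin.sum_univ_four] using hpu)
    (by simp [hw, hul, dotProduct, Fin.sum_univ_four, mul_conj, sub_eq_add_neg]) θ hD hU hV
end

section
/- Fix ε = ±1 and for q ∈ ℝ⁴ let M_ε(q) be the 5×5 real matrix [[cos(q³+q⁴), −ε sin(q³+q⁴), 0, 0, q¹], [ε sin(q³+q⁴), cos(q³+q⁴), 0, 0, q²], [0, 0, 1, 0, q³], [0, 0, 0, 1, q⁴], [0, 0, 0, 0, 1]]. Then the set SG₀^ε = { M_ε(q) : q ∈ ℝ⁴ } is a subgroup of GL(5,ℝ) (it contains the identity and is closed under matrix multiplication and inversion), and its affine action on ℝ⁴, sending x to the first four components of M_ε(q)·(x¹,x²,x³,x⁴,1)ᵀ, is simply transitive: for all x, y ∈ ℝ⁴ there exists a unique q ∈ ℝ⁴ whose action sends x to y. -/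
/-!
`M_ε(q)` is the homogeneous matrix of the affine map `x ↦ R(q³ + q⁴) x + q`, where `R(θ)` rotates
the first two coordinates by `εθ` and fixes the other two. Hence `R` preserves the functional
`q ↦ q³ + q⁴` that supplies its own angle. This makes the angle of a composite the sum of the
angles, so that `M_ε(q) M_ε(q') = M_ε(q · q')`, where `q · q'` is the affine action of `q` on the
point `q'`. It also makes `q · x = y` force the angle of `q` to be that of `y - x`, after which
`q = y - R x` is determined. The inverse of `M_ε(q)` is `M_ε(q')` for the `q'` carrying the point
`q` to the origin.
-/

open Matrix

/-- The 5×5 matrix `M_ε(q)` realising an element of the massless screw group. -/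
noncomputable def masslessScrew (ε : ℝ) (q : Fin 4 → ℝ) : Matrix (Fin 5) (Fin 5) ℝ :=
  !![Real.cos (q 2 + q 3), -ε * Real.sin (q 2 + q 3), 0, 0, q 0;
     ε * Real.sin (q 2 + q 3), Real.cos (q 2 + q 3), 0, 0, q 1;
     0, 0, 1, 0, q 2;
     0, 0, 0, 1, q 3;
     0, 0, 0, 0, 1]

/-- The affine action of `M_ε(q)` on `ℝ⁴`: the first four components of
`M_ε(q)·(x¹,x²,x³,x⁴,1)ᵀ`. -/
noncomputable def masslessScrewAction (ε : ℝ) (q : Fin 4 → ℝ) (x : Fin 4 → ℝ) : Fin 4 → ℝ :=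
  fun i => (masslessScrew ε q).mulVec ![x 0, x 1, x 2, x 3, 1] i.castSucc

section AffineMatrix

variable {R : Type*} [NonAssocSemiring R] {n : ℕ}

/-- The homogeneous `(n + 1) × (n + 1)` matrix `[[A, v], [0, 1]]` of the affine map
`x ↦ A x + v`, acting on column vectors `(x, 1)`. -/
def affineMatrix (A : Matrix (Fin n) (Fin n) R) (v : Fin n → R) :
    Matrix (Fin (n + 1)) (Fin (n + 1)) R :=
  Matrix.of (Fin.snoc (fun i => Fin.snoc (A i) (v i)) (Fin.snoc 0 1))

theorem affineMatrix_one_zero : affineMatrix (1 : Matrix (Fin n) (Fin n) R) 0 = 1 := by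
  ext i j
  cases i using Fin.lastCases <;> cases j using Fin.lastCases <;>
    simp [affineMatrix, Matrix.one_apply, (Fin.castSucc_ne_last _).symm]

theorem affineMatrix_mul (A B : Matrix (Fin n) (Fin n) R) (v w : Fin n → R) :
    affineMatrix A v * affineMatrix B w = affineMatrix (A * B) (A *ᵥ w + v) := by
  ext i j
  cases i using Fin.lastCases <;> cases j using Fin.lastCases <;>
    simp [affineMatrix, Matrix.mul_apply, Matrix.mulVec, dotProduct, Fin.sum_univ_castSucc]

theorem affineMatrix_mulVec_snoc_one (A : Matrix (Fin n) (Fin n) R) (v x : Fin n → R) :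
    affineMatrix A v *ᵥ Fin.snoc x 1 = Fin.snoc (A *ᵥ x + v) 1 := by
  ext i
  cases i using Fin.lastCases <;>
    simp [affineMatrix, Matrix.mulVec, dotProduct, Fin.sum_univ_castSucc]

end AffineMatrix

theorem existsUnique_add_eq_of_map_invariant {V Θ : Type*} [AddGroup V] [AddGroup Θ]
    (angle : V →+ Θ) (T : Θ → V → V) (hT : ∀ θ x, angle (T θ x) = angle x) (x y : V) :
    ∃! q : V, T (angle q) x + q = y := by
  refine ⟨-T (-angle x + angle y) x + y, ?_, ?_⟩
  · simp [hT]
  · rintro q rfl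
    simp [hT]

/-- The linear part of the screw motion of handedness `ε`: rotation of the first two coordinates
by `θ` for `ε = 1` and by `-θ` for `ε = -1`. -/
noncomputable def screwRotation (ε θ : ℝ) : Matrix (Fin 4) (Fin 4) ℝ :=
  !![Real.cos θ, -ε * Real.sin θ, 0, 0;
     ε * Real.sin θ, Real.cos θ, 0, 0;
     0, 0, 1, 0;
     0, 0, 0, 1]

theorem screwRotation_zero (ε : ℝ) : screwRotation ε 0 = 1 := by
  ext i j
  fin_cases i <;> fin_cases j <;> simp [screwRotation]

theorem screwRotation_add {ε : ℝ} (hε : ε ^ 2 = 1) (θ φ : ℝ) :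
    screwRotation ε (θ + φ) = screwRotation ε θ * screwRotation ε φ := by
  have hcos : Real.cos (θ + φ) = Real.cos θ * Real.cos φ - ε * Real.sin θ * (ε * Real.sin φ) := by
    rw [Real.cos_add]
    linear_combination Real.sin θ * Real.sin φ * hε
  have hsin : ε * Real.sin (θ + φ) =
      ε * Real.sin θ * Real.cos φ + Real.cos θ * (ε * Real.sin φ) := by
    rw [Real.sin_add]
    ring
  ext i j
  fin_cases i <;> fin_cases j <;>
    simp [screwRotation, Matrix.mul_apply, Fin.sum_univ_succ, hcos, hsin] <;> ring

/-- The additive map `q ↦ q³ + q⁴` giving the rotation angle of `M_ε(q)`; the paper's `q³` and `q⁴`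
are `q 2` and `q 3`. -/
def screwAngle : (Fin 4 → ℝ) →+ ℝ :=
  Pi.evalAddMonoidHom (fun _ => ℝ) 2 + Pi.evalAddMonoidHom (fun _ => ℝ) 3

theorem screwAngle_screwRotation_mulVec (ε θ : ℝ) (x : Fin 4 → ℝ) :
    screwAngle (screwRotation ε θ *ᵥ x) = screwAngle x := by
  simp [screwAngle, screwRotation, dotProduct, Fin.sum_univ_succ]

theorem masslessScrew_eq_affineMatrix (ε : ℝ) (q : Fin 4 → ℝ) :
    masslessScrew ε q = affineMatrix (screwRotation ε (screwAngle q)) q := by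
  ext i j
  fin_cases i <;> fin_cases j <;> rfl

theorem masslessScrewAction_eq (ε : ℝ) (q x : Fin 4 → ℝ) :
    masslessScrewAction ε q x = screwRotation ε (screwAngle q) *ᵥ x + q := by
  have hx : ![x 0, x 1, x 2, x 3, 1] = Fin.snoc (α := fun _ => ℝ) x 1 := by
    ext i
    fin_cases i <;> rfl
  ext i
  rw [masslessScrewAction, masslessScrew_eq_affineMatrix, hx, affineMatrix_mulVec_snoc_one,
    Fin.snoc_castSucc]

theorem screwAngle_masslessScrewAction (ε : ℝ) (q x : Fin 4 → ℝ) :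
    screwAngle (masslessScrewAction ε q x) = screwAngle x + screwAngle q := by
  rw [masslessScrewAction_eq, map_add, screwAngle_screwRotation_mulVec]

theorem masslessScrew_zero (ε : ℝ) : masslessScrew ε 0 = 1 := by
  rw [masslessScrew_eq_affineMatrix, map_zero, screwRotation_zero, affineMatrix_one_zero]

theorem masslessScrew_mul {ε : ℝ} (hε : ε ^ 2 = 1) (q q' : Fin 4 → ℝ) :
    masslessScrew ε q * masslessScrew ε q' = masslessScrew ε (masslessScrewAction ε q q') := by
  simp only [masslessScrew_eq_affineMatrix]
  rw [affineMatrix_mul, ← screwRotation_add hε, ← masslessScrewAction_eq,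
    screwAngle_masslessScrewAction, add_comm (screwAngle q)]

theorem existsUnique_masslessScrewAction_eq (ε : ℝ) (x y : Fin 4 → ℝ) :
    ∃! q : Fin 4 → ℝ, masslessScrewAction ε q x = y := by
  simp only [masslessScrewAction_eq]
  exact existsUnique_add_eq_of_map_invariant screwAngle
    (fun θ v => screwRotation ε θ *ᵥ v) (screwAngle_screwRotation_mulVec ε) x y

theorem exists_masslessScrew_inverse {ε : ℝ} (hε : ε ^ 2 = 1) (q : Fin 4 → ℝ) :
    ∃ q' : Fin 4 → ℝ, masslessScrew ε q * masslessScrew ε q' = 1 ∧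
      masslessScrew ε q' * masslessScrew ε q = 1 := by
  obtain ⟨q', hq'⟩ := (existsUnique_masslessScrewAction_eq ε q 0).exists
  have hleft : masslessScrew ε q' * masslessScrew ε q = 1 := by
    rw [masslessScrew_mul hε, hq', masslessScrew_zero]
  exact ⟨q', mul_eq_one_comm.mp hleft, hleft⟩

/-- For `ε = ±1`, the set `SG₀^ε = {M_ε(q) : q ∈ ℝ⁴}` contains the
identity and is closed under matrix multiplication and inversion (hence is a subgroup
of `GL(5,ℝ)`), and its affine action on `ℝ⁴` is simply transitive. -/
theorem masslessScrew_group_and_simply_transitive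
    (ε : ℝ) (hε : ε = 1 ∨ ε = -1) :
    (∃ q : Fin 4 → ℝ, masslessScrew ε q = 1) ∧
    (∀ q q' : Fin 4 → ℝ, ∃ q'' : Fin 4 → ℝ,
      masslessScrew ε q * masslessScrew ε q' = masslessScrew ε q'') ∧
    (∀ q : Fin 4 → ℝ, ∃ q' : Fin 4 → ℝ,
      masslessScrew ε q * masslessScrew ε q' = 1 ∧
      masslessScrew ε q' * masslessScrew ε q = 1) ∧
    (∀ x y : Fin 4 → ℝ, ∃! q : Fin 4 → ℝ, masslessScrewAction ε q x = y) := by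
  have hε_sq : ε ^ 2 = 1 := sq_eq_one_iff.mpr hε
  exact ⟨⟨0, masslessScrew_zero ε⟩, fun q q' => ⟨_, masslessScrew_mul hε_sq q q'⟩,
    exists_masslessScrew_inverse hε_sq, existsUnique_masslessScrewAction_eq ε⟩
end

section
/- For ε = ±1, let SG₀^ε = { M_ε(q) : q ∈ ℝ⁴ } where M_ε(q) is the 5×5 real matrix [[cos(q³+q⁴), −ε sin(q³+q⁴), 0, 0, q¹], [ε sin(q³+q⁴), cos(q³+q⁴), 0, 0, q²], [0, 0, 1, 0, q³], [0, 0, 0, 1, q⁴], [0, 0, 0, 0, 1]]. There does not exist a 5×5 real matrix P of block form [[Λ, w], [0, 1]], with Λ a 4×4 real matrix satisfying Λᵀ η Λ = η, det Λ = 1, and Λ₄₄ > 0 (where η = diag(1,1,1,−1)), and w ∈ ℝ⁴, such that P⁻¹ · SG₀^+ · P = SG₀^− as sets of matrices. -/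
/-!
Suppose `P = [[Λ, w], [0, 1]]` matches every screw `M_δ(q)` with a screw `M_ε(q')`. Comparing
translation parts for `q = (0, 0, x, 0)` shows that `M_ε(q')` turns through `k x` with
`k = Λ₃₃ + Λ₄₃`. Differentiating the resulting identity of linear parts at `x = 0` gives
`δ Λ J = ε k J Λ`, where `J` generates the rotations about the screw axis. This forces `Λ` to be
block diagonal, `Λ = A ⊕ D`, where `ε δ k` has the sign of `det A`. The covector `(1, 1) D` is
lightlike because `D ∈ O(1, 1)`; its first entry is `k` and its second has the sign of `D₂₂ = Λ₄₄`,
so `k` has the sign of `det D * Λ₄₄`. Hence `ε δ` has the sign of `det Λ * Λ₄₄`, which is positive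
on the restricted Lorentz group, whereas `ε δ = -1` for opposite handedness.
-/

open Matrix

/-- The 5×5 matrix of block form `[[Λ, w], [0, 1]]` representing an element of the
Poincaré group. -/
def poincareMatrix (Λ : Matrix (Fin 4) (Fin 4) ℝ) (w : Fin 4 → ℝ) :
    Matrix (Fin 5) (Fin 5) ℝ :=
  Matrix.of fun i j =>
    if hi : (i : ℕ) < 4 then
      (if hj : (j : ℕ) < 4 then Λ ⟨i, hi⟩ ⟨j, hj⟩ else w ⟨i, hi⟩)
    else
      (if (j : ℕ) < 4 then 0 else 1)

section PoincareMatrix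

variable (Λ Λ' : Matrix (Fin 4) (Fin 4) ℝ) (w w' : Fin 4 → ℝ) (i j : Fin 4)

@[simp]
lemma poincareMatrix_castSucc_castSucc : poincareMatrix Λ w i.castSucc j.castSucc = Λ i j := by
  simp [poincareMatrix]

@[simp]
lemma poincareMatrix_castSucc_last : poincareMatrix Λ w i.castSucc 4 = w i := by
  simp [poincareMatrix]

@[simp]
lemma poincareMatrix_last_castSucc : poincareMatrix Λ w 4 j.castSucc = 0 := by
  simp [poincareMatrix]

@[simp]
lemma poincareMatrix_last_last : poincareMatrix Λ w 4 4 = 1 := by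
  simp [poincareMatrix]

lemma poincareMatrix_mul :
    poincareMatrix Λ w * poincareMatrix Λ' w' = poincareMatrix (Λ * Λ') (Λ *ᵥ w' + w) := by
  ext i j
  cases i using Fin.lastCases <;> cases j using Fin.lastCases <;>
    simp [Matrix.mul_apply, Matrix.mulVec, dotProduct, Fin.sum_univ_castSucc (n := 4)]

@[simp]
lemma det_poincareMatrix : (poincareMatrix Λ w).det = Λ.det := by
  have hminor : (poincareMatrix Λ w).submatrix (Fin.succAbove 4) (Fin.succAbove 4) = Λ := by
    ext i j
    rw [← poincareMatrix_castSucc_castSucc Λ w i j, ← Fin.succAbove_last]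
    rfl
  simp [det_succ_row _ (Fin.last 4), Fin.sum_univ_castSucc (n := 4), hminor,
    Even.neg_one_pow (by decide : Even 8)]

variable {Λ Λ' w w'}

lemma poincareMatrix_inj : poincareMatrix Λ w = poincareMatrix Λ' w' ↔ Λ = Λ' ∧ w = w' := by
  refine ⟨fun h => ⟨?_, ?_⟩, fun ⟨hΛ, hw⟩ => by rw [hΛ, hw]⟩
  · ext i j
    simpa using congrFun₂ h i.castSucc j.castSucc
  · ext i
    simpa using congrFun₂ h i.castSucc 4

end PoincareMatrix

/-- The linear part of a massless screw: for `ε = ±1`, the rotation by `ε * θ` in the plane of the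
first two coordinates. As in `masslessScrew`, `ε` may be any real number. -/
noncomputable def axialRotation (ε θ : ℝ) : Matrix (Fin 4) (Fin 4) ℝ :=
  !![Real.cos θ, -ε * Real.sin θ, 0, 0;
     ε * Real.sin θ, Real.cos θ, 0, 0;
     0, 0, 1, 0;
     0, 0, 0, 1]

/-- The infinitesimal generator of `axialRotation 1`. -/
def axialGenerator : Matrix (Fin 4) (Fin 4) ℝ :=
  !![0, -1, 0, 0;
     1, 0, 0, 0;
     0, 0, 0, 0;
     0, 0, 0, 0]

lemma masslessScrew_eq_poincareMatrix (ε : ℝ) (q : Fin 4 → ℝ) :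
    masslessScrew ε q = poincareMatrix (axialRotation ε (q 2 + q 3)) q := by
  ext i j
  fin_cases i <;> fin_cases j <;> rfl

lemma mul_axialRotation_of_intertwines {ε δ : ℝ} {Λ : Matrix (Fin 4) (Fin 4) ℝ} {w : Fin 4 → ℝ}
    (h : ∀ q, ∃ q', poincareMatrix Λ w * masslessScrew δ q
      = masslessScrew ε q' * poincareMatrix Λ w) (x : ℝ) :
    Λ * axialRotation δ x = axialRotation ε ((Λ 2 2 + Λ 3 2) * x) * Λ := by
  obtain ⟨q', hq'⟩ := h ![0, 0, x, 0]
  simp only [masslessScrew_eq_poincareMatrix, poincareMatrix_mul, poincareMatrix_inj] at hq'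
  obtain ⟨hlinear, htranslation⟩ := hq'
  have h2 : Λ 2 2 * x = q' 2 := by
    simpa [axialRotation, mulVec, dotProduct, Fin.sum_univ_four, add_comm]
      using congrFun htranslation 2
  have h3 : Λ 3 2 * x = q' 3 := by
    simpa [axialRotation, mulVec, dotProduct, Fin.sum_univ_four, add_comm]
      using congrFun htranslation 3
  rw [add_mul, h2, h3]
  simpa using hlinear

lemma hasDerivAt_axialRotation_mul_zero (ε k : ℝ) (i j : Fin 4) :
    HasDerivAt (fun x => axialRotation ε (k * x) i j) ((ε * k) * axialGenerator i j) 0 := by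
  have hlin : HasDerivAt (fun x : ℝ => k * x) k 0 := by
    simpa using (hasDerivAt_id (0 : ℝ)).const_mul k
  have hcos : HasDerivAt (fun x => Real.cos (k * x)) 0 0 := by simpa using hlin.cos
  have hsin : HasDerivAt (fun x => ε * Real.sin (k * x)) (ε * k) 0 := by
    simpa using hlin.sin.const_mul ε
  have hnegsin : HasDerivAt (fun x => -(ε * Real.sin (k * x))) (-(ε * k)) 0 := hsin.fun_neg
  fin_cases i <;> fin_cases j <;>
    simp [axialRotation, axialGenerator, hasDerivAt_const, hcos, hsin, hnegsin]

lemma smul_mul_axialGenerator_of_mul_axialRotation {Λ : Matrix (Fin 4) (Fin 4) ℝ} {ε δ k : ℝ}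
    (h : ∀ x, Λ * axialRotation δ x = axialRotation ε (k * x) * Λ) :
    δ • (Λ * axialGenerator) = (ε * k) • (axialGenerator * Λ) := by
  ext i j
  have hleft : HasDerivAt (fun x => (Λ * axialRotation δ x) i j)
      ((δ • (Λ * axialGenerator)) i j) 0 := by
    rw [← Matrix.mul_smul]
    simpa [mul_apply] using HasDerivAt.fun_sum fun l (_ : l ∈ Finset.univ) =>
      (hasDerivAt_axialRotation_mul_zero δ 1 l j).const_mul (Λ i l)
  have hright : HasDerivAt (fun x => (axialRotation ε (k * x) * Λ) i j)
      (((ε * k) • (axialGenerator * Λ)) i j) 0 := by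
    rw [← Matrix.smul_mul]
    simpa [mul_apply] using HasDerivAt.fun_sum fun l (_ : l ∈ Finset.univ) =>
      (hasDerivAt_axialRotation_mul_zero ε k i l).mul_const (Λ l j)
  simp only [h] at hleft
  exact hleft.unique hright

lemma det_ne_zero_of_transpose_mul_mul_eq {n R : Type*} [Fintype n] [DecidableEq n] [CommRing R]
    {η Λ : Matrix n n R} (hη : η.det ≠ 0) (h : Λᵀ * η * Λ = η) : Λ.det ≠ 0 := by
  intro hΛ
  apply hη
  rw [← h, det_mul, hΛ, mul_zero]

lemma blocks_of_smul_mul_fromBlocks_eq {R m n : Type*} [CommRing R] [IsDomain R] [Fintype m]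
    [DecidableEq m] [Fintype n] {A J : Matrix m m R} {B : Matrix m n R} {C : Matrix n m R}
    {D : Matrix n n R} {c δ : R} (hδ : δ ≠ 0) (hJ : IsUnit J.det)
    (h : δ • (fromBlocks A B C D * fromBlocks J 0 0 0)
      = c • (fromBlocks J 0 0 0 * fromBlocks A B C D)) :
    δ • (A * J) = c • (J * A) ∧ c • B = 0 ∧ C = 0 := by
  simp only [fromBlocks_multiply, fromBlocks_smul, fromBlocks_inj, Matrix.mul_zero,
    Matrix.zero_mul, add_zero, smul_zero] at h
  obtain ⟨hA, hB, hC, -⟩ := h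
  refine ⟨hA, ?_, ?_⟩
  · rw [← nonsing_inv_mul_cancel_left J (c • B) hJ, Matrix.mul_smul, ← hB, Matrix.mul_zero]
  · rw [← mul_nonsing_inv_cancel_right J C hJ, (smul_eq_zero.mp hC).resolve_left hδ,
      Matrix.zero_mul]

/-- The rotation of the plane by a right angle, the nonzero block of `axialGenerator`. -/
def quarterTurn (R : Type*) [Ring R] : Matrix (Fin 2) (Fin 2) R :=
  !![0, -1; 1, 0]

lemma isUnit_det_quarterTurn (R : Type*) [CommRing R] : IsUnit (quarterTurn R).det := by
  simp [quarterTurn]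

section LinearOrderedCommRing

variable {R : Type*} [CommRing R] [LinearOrder R] [IsStrictOrderedRing R]

lemma mul_mul_det_pos_of_smul_mul_quarterTurn_eq {A : Matrix (Fin 2) (Fin 2) R} {c δ : R}
    (hδ : δ ≠ 0) (hA : A.det ≠ 0)
    (h : δ • (A * quarterTurn R) = c • (quarterTurn R * A)) : 0 < c * δ * A.det := by
  have h10 : δ * A 1 1 = c * A 0 0 := by
    simpa [quarterTurn, mul_apply, vecMul, dotProduct] using congrFun₂ h 1 0
  have h11 : -(δ * A 1 0) = c * A 0 1 := by
    simpa [quarterTurn, mul_apply, vecMul, dotProduct] using congrFun₂ h 1 1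
  have hrow : 0 < A 1 0 ^ 2 + A 1 1 ^ 2 := by
    by_contra! hle
    have h0 : A 1 0 = 0 := by nlinarith
    have h1 : A 1 1 = 0 := by nlinarith
    exact hA (by rw [det_fin_two, h0, h1, mul_zero, mul_zero, sub_zero])
  calc 0 < δ ^ 2 * (A 1 0 ^ 2 + A 1 1 ^ 2) := by positivity
    _ = c * δ * A.det := by
      rw [det_fin_two]
      linear_combination δ * A 1 1 * h10 - δ * A 1 0 * h11

lemma add_mul_det_mul_apply_pos {D : Matrix (Fin 2) (Fin 2) R}
    (h : Dᵀ * diagonal ![1, -1] * D = diagonal ![1, -1]) :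
    0 < (D 0 0 + D 1 0) * (D.det * D 1 1) := by
  have h01 : D 0 0 * D 0 1 - D 1 0 * D 1 1 = 0 := by
    simpa [mul_apply, sub_eq_add_neg] using congrFun₂ h 0 1
  have h11 : D 0 1 ^ 2 - D 1 1 ^ 2 = -1 := by
    simpa [mul_apply, sub_eq_add_neg, sq] using congrFun₂ h 1 1
  have hdet : D.det ≠ 0 := det_ne_zero_of_transpose_mul_mul_eq (by simp) h
  have hcolumns : D 0 0 + D 1 0 = D.det * (D 0 1 + D 1 1) := by
    rw [det_fin_two]
    linear_combination (D 0 0 + D 1 0) * h11 - (D 0 1 + D 1 1) * h01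
  have hsign : 0 < (D 0 1 + D 1 1) * D 1 1 := by nlinarith [sq_nonneg (D 0 1 + D 1 1)]
  calc 0 < D.det ^ 2 * ((D 0 1 + D 1 1) * D 1 1) := by positivity
    _ = (D 0 0 + D 1 0) * (D.det * D 1 1) := by
      rw [hcolumns]
      ring

lemma mul_det_fromBlocks_mul_apply_pos {A B C D : Matrix (Fin 2) (Fin 2) R} {ε δ : R}
    (hδ : δ ≠ 0)
    (hη : (fromBlocks A B C D)ᵀ * fromBlocks 1 0 0 (diagonal ![1, -1]) * fromBlocks A B C D
      = fromBlocks 1 0 0 (diagonal ![1, -1]))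
    (hJ : δ • (fromBlocks A B C D * fromBlocks (quarterTurn R) 0 0 0)
      = (ε * (D 0 0 + D 1 0)) • (fromBlocks (quarterTurn R) 0 0 0 * fromBlocks A B C D)) :
    0 < ε * δ * ((fromBlocks A B C D).det * D 1 1) := by
  set k := D 0 0 + D 1 0
  have hdet := det_ne_zero_of_transpose_mul_mul_eq (by simp) hη
  obtain ⟨hA, hB, rfl⟩ := blocks_of_smul_mul_fromBlocks_eq hδ (isUnit_det_quarterTurn R) hJ
  rw [det_fromBlocks_zero₂₁] at hdet ⊢
  have hdetA : 0 < ε * k * δ * A.det :=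
    mul_mul_det_pos_of_smul_mul_quarterTurn_eq hδ (left_ne_zero_of_mul hdet) hA
  obtain rfl : B = 0 := (smul_eq_zero.mp hB).resolve_left fun h0 => by simp [h0] at hdetA
  have hD : Dᵀ * diagonal ![1, -1] * D = diagonal ![1, -1] := by
    simpa [fromBlocks_transpose, fromBlocks_multiply] using congrArg toBlocks₂₂ hη
  have hdetD : 0 < k * (D.det * D 1 1) := add_mul_det_mul_apply_pos hD
  refine pos_of_mul_pos_right (a := k ^ 2) ?_ (sq_nonneg k)
  calc 0 < ε * k * δ * A.det * (k * (D.det * D 1 1)) := mul_pos hdetA hdetD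
    _ = k ^ 2 * (ε * δ * (A.det * D.det * D 1 1)) := by ring

end LinearOrderedCommRing

/-- The splitting of the four coordinates into the rotation plane and the plane spanned by the screw
axis and time. -/
abbrev planeSplitting : Fin 2 ⊕ Fin 2 ≃ Fin 4 :=
  finSumFinEquiv

lemma axialGenerator_submatrix_planeSplitting :
    axialGenerator.submatrix planeSplitting planeSplitting
      = fromBlocks (quarterTurn ℝ) 0 0 (0 : Matrix (Fin 2) (Fin 2) ℝ) := by
  ext (i | i) (j | j) <;> fin_cases i <;> fin_cases j <;> rfl

lemma diagonal_submatrix_planeSplitting :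
    (diagonal ![1, 1, 1, -1] : Matrix (Fin 4) (Fin 4) ℝ).submatrix planeSplitting planeSplitting
      = fromBlocks (1 : Matrix (Fin 2) (Fin 2) ℝ) 0 0 (diagonal ![1, -1]) := by
  ext (i | i) (j | j) <;> fin_cases i <;> fin_cases j <;> simp [diagonal] <;> rfl

lemma mul_det_mul_apply_pos_of_smul_mul_axialGenerator_eq {Λ : Matrix (Fin 4) (Fin 4) ℝ} {ε δ : ℝ}
    (hδ : δ ≠ 0) (hη : Λᵀ * diagonal ![1, 1, 1, -1] * Λ = diagonal ![1, 1, 1, -1])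
    (hJ : δ • (Λ * axialGenerator) = (ε * (Λ 2 2 + Λ 3 2)) • (axialGenerator * Λ)) :
    0 < ε * δ * (Λ.det * Λ 3 3) := by
  have hη' := congrArg (fun M => M.submatrix planeSplitting planeSplitting) hη
  have hJ' := congrArg (fun M => M.submatrix planeSplitting planeSplitting) hJ
  simp only [submatrix_smul, Pi.smul_apply] at hJ'
  simp only [← submatrix_mul_equiv _ _ _ planeSplitting _, ← transpose_submatrix,
    diagonal_submatrix_planeSplitting, axialGenerator_submatrix_planeSplitting] at hη' hJ'
  rw [← fromBlocks_toBlocks (Λ.submatrix planeSplitting planeSplitting)] at hη' hJ'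
  have hpos := mul_det_fromBlocks_mul_apply_pos hδ hη' hJ'
  rw [fromBlocks_toBlocks, det_submatrix_equiv_self] at hpos
  exact hpos

lemma exists_mul_eq_mul_of_subset_image_conj {n R : Type*} [Fintype n] [DecidableEq n]
    [CommRing R] {P A : Matrix n n R} {S T : Set (Matrix n n R)} (hP : IsUnit P.det)
    (h : S ⊆ (fun B => P⁻¹ * B * P) '' T) (hA : A ∈ S) : ∃ B ∈ T, P * A = B * P := by
  obtain ⟨B, hB, rfl⟩ := h hA
  exact ⟨B, hB, by simp only [Matrix.mul_assoc, mul_nonsing_inv_cancel_left _ _ hP]⟩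

theorem no_restricted_poincare_conjugation_between_massless_screw_groups_general {ε δ : ℝ}
    (hδ : δ ≠ 0) :
    ¬ ∃ (Λ : Matrix (Fin 4) (Fin 4) ℝ) (w : Fin 4 → ℝ),
        Λᵀ * diagonal ![1, 1, 1, -1] * Λ = diagonal ![1, 1, 1, -1] ∧
        ε * δ * (Λ.det * Λ 3 3) ≤ 0 ∧
        {A | ∃ q, A = masslessScrew δ q} ⊆
          (fun A => (poincareMatrix Λ w)⁻¹ * A * poincareMatrix Λ w) ''
            {A | ∃ q, A = masslessScrew ε q} := by
  rintro ⟨Λ, w, hη, hsign, hsub⟩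
  have hP : IsUnit (poincareMatrix Λ w).det := by
    rw [det_poincareMatrix]
    exact (det_ne_zero_of_transpose_mul_mul_eq (by simp [Fin.prod_univ_four]) hη).isUnit
  have hscrew (q : Fin 4 → ℝ) : ∃ q', poincareMatrix Λ w * masslessScrew δ q
      = masslessScrew ε q' * poincareMatrix Λ w := by
    obtain ⟨_, ⟨q', rfl⟩, hq'⟩ := exists_mul_eq_mul_of_subset_image_conj hP hsub ⟨q, rfl⟩
    exact ⟨q', hq'⟩
  have hrotation := mul_axialRotation_of_intertwines hscrew
  have hgenerator := smul_mul_axialGenerator_of_mul_axialRotation hrotation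
  exact hsign.not_gt
    (mul_det_mul_apply_pos_of_smul_mul_axialGenerator_eq hδ hη hgenerator)

/-- There is no element `P = [[Λ, w], [0, 1]]` of the restricted
Poincaré group (`Λᵀ η Λ = η`, `det Λ = 1`, `Λ₄₄ > 0`, `w ∈ ℝ⁴`) conjugating the
right-handed massless screw group `SG₀^+` onto the left-handed one `SG₀^−`. -/
theorem no_restricted_poincare_conjugation_between_massless_screw_groups
    (η : Matrix (Fin 4) (Fin 4) ℝ)
    (hη : η = Matrix.diagonal ![1, 1, 1, -1]) :
    ¬ ∃ (Λ : Matrix (Fin 4) (Fin 4) ℝ) (w : Fin 4 → ℝ),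
        Λᵀ * η * Λ = η ∧ Λ.det = 1 ∧ 0 < Λ 3 3 ∧
        (fun A => (poincareMatrix Λ w)⁻¹ * A * poincareMatrix Λ w) ''
            {A | ∃ q : Fin 4 → ℝ, A = masslessScrew 1 q}
          = {A | ∃ q : Fin 4 → ℝ, A = masslessScrew (-1) q} := by
  rintro ⟨Λ, w, hΛ, hdet, hpos, h⟩
  exact no_restricted_poincare_conjugation_between_massless_screw_groups_general
    (neg_ne_zero.mpr one_ne_zero)
    ⟨Λ, w, hη ▸ hΛ, by simpa [hdet] using hpos.le, h.superset⟩
end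

section
/- Let m > 0 and a, b ∈ ℝ. Define φ : ℝ⁴ → ℝ⁴ by φ(x) = (x¹ + a cos(2mx⁴), x² + a sin(2mx⁴), x³ + 2mb x⁴, x⁴), and for each q ∈ ℝ⁴ define ξ_q : ℝ⁴ → ℝ⁴ by ξ_q(x) = (x¹ cos(2mq⁴) − x² sin(2mq⁴) + q¹, x¹ sin(2mq⁴) + x² cos(2mq⁴) + q², x³ + q³, x⁴ + q⁴). Then for every q ∈ ℝ⁴ one has ξ_q ∘ φ = φ ∘ ξ_{q'}, where q' = (q¹, q², q³ − 2mb q⁴, q⁴). -/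
/-!
The isometries `ξ_q` are the left translations of a group law `q * x = ξ_q x` on `ℝ⁴`, the shear
`σ x = (x¹, x², x³ + 2mb x⁴, x⁴)` is an automorphism of this group, and `φ x = σ x * (a, 0, 0, 0)`.
Since left translations commute with right translations,
`q * φ x = (q * σ x) * (a, 0, 0, 0) = σ (σ⁻¹ q * x) * (a, 0, 0, 0) = φ (σ⁻¹ q * x)`,
and `q' = σ⁻¹ q`.
-/

/-- The product of the screw group on `ℝ⁴`: `q` acts on `x` by the rotation through the angle
`ω q⁴` in the first two coordinates, followed by the translation by `q`. The massive screw group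
`SG_m` has `ω = 2m`, and coordinates `x¹, …, x⁴` are indexed from `0`. -/
noncomputable def screwMul (ω : ℝ) (q x : Fin 4 → ℝ) : Fin 4 → ℝ :=
  ![x 0 * Real.cos (ω * q 3) - x 1 * Real.sin (ω * q 3) + q 0,
    x 0 * Real.sin (ω * q 3) + x 1 * Real.cos (ω * q 3) + q 1,
    x 2 + q 2,
    x 3 + q 3]

/-- The shear of `ℝ⁴` adding `c` times the fourth coordinate to the third; for `c = 2mb` it
accounts for the charge in the massive solution. -/
def pitchShear (c : ℝ) (x : Fin 4 → ℝ) : Fin 4 → ℝ :=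
  ![x 0, x 1, x 2 + c * x 3, x 3]

theorem screwMul_assoc (ω : ℝ) (p q x : Fin 4 → ℝ) :
    screwMul ω (screwMul ω p q) x = screwMul ω p (screwMul ω q x) := by
  have cos_angle : Real.cos (ω * (q 3 + p 3)) =
      Real.cos (ω * q 3) * Real.cos (ω * p 3) - Real.sin (ω * q 3) * Real.sin (ω * p 3) := by
    rw [mul_add, Real.cos_add]
  have sin_angle : Real.sin (ω * (q 3 + p 3)) =
      Real.sin (ω * q 3) * Real.cos (ω * p 3) + Real.cos (ω * q 3) * Real.sin (ω * p 3) := by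
    rw [mul_add, Real.sin_add]
  simp only [screwMul, Matrix.cons_val, cos_angle, sin_angle]
  congrm ![?_, ?_, ?_, ?_] <;> ring

theorem pitchShear_screwMul (ω c : ℝ) (q x : Fin 4 → ℝ) :
    pitchShear c (screwMul ω q x) = screwMul ω (pitchShear c q) (pitchShear c x) := by
  simp only [pitchShear, screwMul, Matrix.cons_val]
  congrm ![_, _, ?_, _]
  ring

theorem pitchShear_pitchShear_neg (c : ℝ) (x : Fin 4 → ℝ) :
    pitchShear c (pitchShear (-c) x) = x := by
  ext i
  fin_cases i <;> simp [pitchShear]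

/-- The massive solution
`φ(x) = (x¹ + a cos(2mx⁴), x² + a sin(2mx⁴), x³ + 2mb x⁴, x⁴)` is homogeneous with
respect to the massive screw group: for every `q ∈ ℝ⁴`, `ξ_q ∘ φ = φ ∘ ξ_{q'}` with
`q' = (q¹, q², q³ − 2mb q⁴, q⁴)`, where
`ξ_q(x) = (x¹cos(2mq⁴) − x²sin(2mq⁴) + q¹, x¹sin(2mq⁴) + x²cos(2mq⁴) + q², x³+q³, x⁴+q⁴)`. -/
theorem massive_solution_homogeneous
    (m : ℝ) (hm : 0 < m) (a b : ℝ)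
    (φ : (Fin 4 → ℝ) → (Fin 4 → ℝ))
    (hφ : ∀ x : Fin 4 → ℝ, φ x =
      ![x 0 + a * Real.cos (2 * m * x 3),
        x 1 + a * Real.sin (2 * m * x 3),
        x 2 + 2 * m * b * x 3,
        x 3])
    (ξ : (Fin 4 → ℝ) → (Fin 4 → ℝ) → (Fin 4 → ℝ))
    (hξ : ∀ q x : Fin 4 → ℝ, ξ q x =
      ![x 0 * Real.cos (2 * m * q 3) - x 1 * Real.sin (2 * m * q 3) + q 0,
        x 0 * Real.sin (2 * m * q 3) + x 1 * Real.cos (2 * m * q 3) + q 1,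
        x 2 + q 2,
        x 3 + q 3]) :
    ∀ q : Fin 4 → ℝ,
      ξ q ∘ φ = φ ∘ ξ ![q 0, q 1, q 2 - 2 * m * b * q 3, q 3] := by
  intro q
  have ξ_eq (p x : Fin 4 → ℝ) : ξ p x = screwMul (2 * m) p x := hξ p x
  have φ_eq (x : Fin 4 → ℝ) :
      φ x = screwMul (2 * m) (pitchShear (2 * m * b) x) ![a, 0, 0, 0] := by
    simp [hφ, screwMul, pitchShear, add_comm]
  have q'_eq : ![q 0, q 1, q 2 - 2 * m * b * q 3, q 3] = pitchShear (-(2 * m * b)) q := by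
    simp [pitchShear, sub_eq_add_neg]
  funext x
  simp only [Function.comp_apply, ξ_eq, φ_eq, q'_eq]
  rw [pitchShear_screwMul, pitchShear_pitchShear_neg, screwMul_assoc]
end

section
/- Let ξ ∈ ℝ⁴ and let ⟨x,y⟩ = η^{αβ} x_α y_β denote the Minkowski pairing of covectors, extended bilinearly to ℂ⁴, with ‖ξ‖² = ⟨ξ,ξ⟩. Define the ℂ-linear map T_ξ : ℂ⁴ ⊕ ℂ → ℂ⁴ ⊕ ℂ by T_ξ(v, f) = ( ‖ξ‖² v − ⟨ξ,v⟩ ξ + i f ξ, −i ⟨ξ,v⟩ ). Then det T_ξ = −‖ξ‖⁸. -/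
/-!
An endomorphism of `M × R` in block form `[[f, u], [φ, e]]` has determinant
`det (f - u ⊗ φ) + (e - 1) * det f`: its last row `(φ, e)` is `(φ, 1) + (0, e - 1)`, and the Schur
complement of the corner `1` in `[[f, u], [φ, 1]]` is `f - u ⊗ φ`. With `N = ⟨ξ, ξ⟩`, the symbol is
the case `f = N - ξ ⊗ ⟨ξ, ·⟩`, `u = iξ`, `φ = -i⟨ξ, ·⟩`, `e = 0`, so its determinant is
`det (N - 2 ξ ⊗ ⟨ξ, ·⟩) - det (N - ξ ⊗ ⟨ξ, ·⟩)`. Both terms are values at `N` of the characteristic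
polynomial `X ^ n - t X ^ (n - 1)` of a rank-one endomorphism of trace `t`, where `t = 2 N` and
`t = N`, which gives `-N ^ n - 0`. Nothing is divided by `N`, so null `ξ` needs no separate
argument.
-/

open Matrix Module

theorem det_fromBlocks_unique {m ι R : Type*} [Fintype m] [DecidableEq m] [Unique ι] [CommRing R]
    (A : Matrix m m R) (B : Matrix m ι R) (C : Matrix ι m R) (D : Matrix ι ι R) :
    (fromBlocks A B C D).det = (A - B * C).det + (D.det - 1) * A.det := by
  have updateRow_eq (C' : Matrix ι m R) (D' : Matrix ι ι R) :
      (fromBlocks A B C D).updateRow (.inr default) (Sum.elim (C' default) (D' default)) =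
        fromBlocks A B C' D' := by
    ext (k | k) (l | l) <;> simp [Unique.eq_default, updateRow_apply]
  have row_split : Sum.elim (C default) (D default) =
      Sum.elim (C default) ((1 : Matrix ι ι R) default) +
        Sum.elim ((0 : Matrix ι m R) default) ((D - 1) default) := by
    ext (l | l) <;> simp
  calc (fromBlocks A B C D).det
      = (fromBlocks A B C 1).det + (fromBlocks A B 0 (D - 1)).det := by
        rw [← updateRow_eq C D, row_split, det_updateRow_add, updateRow_eq, updateRow_eq]
    _ = (A - B * C).det + (D.det - 1) * A.det := by
        rw [det_fromBlocks_one₂₂, det_fromBlocks_zero₂₁, mul_comm A.det, det_unique (D - 1),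
          det_unique D, Matrix.sub_apply, one_apply_eq]

section Bordered

variable {R M : Type*} [CommRing R] [AddCommGroup M] [Module R M]

/-- The endomorphism of `M × R` with block matrix `[[f, u], [φ, e]]`: the coordinate-free form of
an endomorphism matrix bordered by one column and one row. -/
def borderedEnd (f : End R M) (u : M) (φ : Dual R M) (e : R) : End R (M × R) :=
  (f.coprod (LinearMap.toSpanSingleton R M u)).prod (φ.coprod (LinearMap.mulLeft R e))

theorem borderedEnd_apply (f : End R M) (u : M) (φ : Dual R M) (e : R) (x : M × R) :
    borderedEnd f u φ e x = (f x.1 + x.2 • u, φ x.1 + e * x.2) :=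
  rfl

theorem toMatrix_borderedEnd {ι : Type*} [Fintype ι] [DecidableEq ι] (b : Basis ι R M)
    (f : End R M) (u : M) (φ : Dual R M) (e : R) :
    LinearMap.toMatrix (b.prod (.singleton Unit R)) (b.prod (.singleton Unit R))
        (borderedEnd f u φ e) =
      fromBlocks (LinearMap.toMatrix b b f) (replicateCol Unit (b.repr u))
        (replicateRow Unit (φ ∘ b)) (of fun _ _ => e) := by
  ext (i | i) (j | j) <;> simp [LinearMap.toMatrix_apply, borderedEnd_apply]

variable [Free R M] [Module.Finite R M]

theorem det_borderedEnd (f : End R M) (u : M) (φ : Dual R M) (e : R) :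
    LinearMap.det (borderedEnd f u φ e) =
      LinearMap.det (f - φ.smulRight u) + (e - 1) * LinearMap.det f := by
  let b := Free.chooseBasis R M
  rw [← LinearMap.det_toMatrix (b.prod (.singleton Unit R)), toMatrix_borderedEnd,
    det_fromBlocks_unique, ← vecMulVec_eq, ← LinearMap.toMatrix_smulRight, ← map_sub,
    LinearMap.det_toMatrix, LinearMap.det_toMatrix, det_unique, of_apply]

theorem det_algebraMap_sub_smulRight (a : R) (φ : Dual R M) (u : M) :
    LinearMap.det (algebraMap R (End R M) a - φ.smulRight u) =
      a ^ finrank R M - φ u * a ^ (finrank R M - 1) := by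
  nontriviality R
  let b := Free.chooseBasis R M
  have dotProduct_repr : b.repr u ⬝ᵥ (φ ∘ b) = φ u := by
    conv_rhs => rw [← b.sum_repr u, map_sum]
    simp [dotProduct]
  rw [← LinearMap.eval_charpoly, ← LinearMap.charpoly_toMatrix _ b, LinearMap.toMatrix_smulRight,
    charpoly_vecMulVec, dotProduct_repr, ← finrank_eq_card_basis b]
  simp

theorem principal_symbol_determinant_general [Nontrivial M] (B : LinearMap.BilinForm R M) (ξ : M)
    {i : R} (hi : i ^ 2 = -1) (T : End R (M × R))
    (hT : ∀ v f, T (v, f) = (B ξ ξ • v - B ξ v • ξ + (i * f) • ξ, -i * B ξ v)) :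
    LinearMap.det T = -(B ξ ξ) ^ finrank R M := by
  have := Module.nontrivial R M
  have T_eq : T = borderedEnd (algebraMap R (End R M) (B ξ ξ) - (B ξ).smulRight ξ)
      (i • ξ) (-i • B ξ) 0 := by
    ext v <;> simp [hT, borderedEnd_apply]
  have smulRight_eq : (-i • B ξ).smulRight (i • ξ) = (B ξ).smulRight ξ := by
    ext v
    simp only [LinearMap.smulRight_apply, LinearMap.smul_apply, smul_eq_mul, smul_smul]
    congr 1
    linear_combination -(B ξ v) * hi
  have schur : algebraMap R (End R M) (B ξ ξ) - (B ξ).smulRight ξ - (-i • B ξ).smulRight (i • ξ) =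
      algebraMap R (End R M) (B ξ ξ) - ((2 : R) • B ξ).smulRight ξ := by
    rw [smulRight_eq, two_smul]
    ext v
    simp only [LinearMap.sub_apply, LinearMap.smulRight_apply, LinearMap.add_apply]
    module
  have pow_pred : B ξ ξ * B ξ ξ ^ (finrank R M - 1) = B ξ ξ ^ finrank R M :=
    mul_pow_sub_one ((finrank_pos_iff_of_free R M).mpr inferInstance).ne' _
  rw [T_eq, det_borderedEnd, schur, det_algebraMap_sub_smulRight, det_algebraMap_sub_smulRight,
    LinearMap.smul_apply, smul_eq_mul]
  linear_combination -pow_pred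

end Bordered

/-- The Minkowski pairing on covectors, extended bilinearly to `ℂ⁴`, with signature
`(+, +, +, -)`. -/
noncomputable def minkowskiForm : LinearMap.BilinForm ℂ (Fin 4 → ℂ) :=
  Matrix.toBilin' (diagonal ![1, 1, 1, -1])

theorem minkowskiForm_apply (x y : Fin 4 → ℂ) :
    minkowskiForm x y = x 0 * y 0 + x 1 * y 1 + x 2 * y 2 - x 3 * y 3 := by
  simp [minkowskiForm, Matrix.toBilin'_apply', dotProduct, Fin.sum_univ_four, mulVec_diagonal,
    sub_eq_add_neg]

/-- Let `ξ ∈ ℝ⁴` and `⟨x,y⟩ = η^{αβ}x_α y_β` the Minkowski pairing of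
covectors, extended bilinearly to `ℂ⁴`, with `‖ξ‖² = ⟨ξ,ξ⟩`.  The ℂ-linear map
`T_ξ(v,f) = (‖ξ‖²v − ⟨ξ,v⟩ξ + ifξ, −i⟨ξ,v⟩)` on `ℂ⁴ ⊕ ℂ` has determinant `−‖ξ‖⁸`. -/
theorem principal_symbol_determinant
    (mink : (Fin 4 → ℂ) → (Fin 4 → ℂ) → ℂ)
    (hmink : ∀ x y : Fin 4 → ℂ, mink x y = x 0 * y 0 + x 1 * y 1 + x 2 * y 2 - x 3 * y 3)
    (ξ : Fin 4 → ℝ)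
    (ξc : Fin 4 → ℂ) (hξc : ∀ i : Fin 4, ξc i = (ξ i : ℂ))
    (T : ((Fin 4 → ℂ) × ℂ) →ₗ[ℂ] ((Fin 4 → ℂ) × ℂ))
    (hT : ∀ (v : Fin 4 → ℂ) (f : ℂ), T (v, f) =
      (fun α => mink ξc ξc * v α - mink ξc v * ξc α + Complex.I * f * ξc α,
       -Complex.I * mink ξc v)) :
    LinearMap.det T = -(mink ξc ξc) ^ 4 := by
  obtain rfl : mink = fun x y => minkowskiForm x y := by
    ext x y
    rw [hmink, minkowskiForm_apply]
  simpa using principal_symbol_determinant_general minkowskiForm ξc Complex.I_sq T hT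
end

section
/- Let a > 0 and let σ¹ = [[0,1],[1,0]], σ² = [[0,−i],[i,0]], σ³ = [[1,0],[0,−1]], σ⁴ = [[1,0],[0,1]] be the covariant Pauli matrices, and σ̃¹ = [[0,−1],[−1,0]], σ̃² = [[0,−i],[i,0]], σ̃³ = [[−1,0],[0,1]], σ̃⁴ = [[1,0],[0,1]] the contravariant Pauli matrices. Define ξ, η : ℝ⁴ → ℂ² by ξ(x) = √(a/2) · (0, i)ᵀ e^{i(x³+x⁴)/2} and η(x) = √(a/2) · (1, 0)ᵀ e^{i(x³+x⁴)/2}. Then ξ satisfies the left-handed massless Dirac equation Σ_{α=1}^{4} σ^α ∂ξ/∂x^α = 0, and η satisfies the right-handed massless Dirac equation Σ_{α=1}^{4} σ̃^α ∂η/∂x^α = 0. -/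
open Complex

/-! A constant-coefficient first-order operator `∑ α, A α ∂_α` maps the plane wave `e^k u` to the
plane wave `e^k (∑ α, k(e_α) A α) u`, so `e^k u` is a solution as soon as `u` lies in the kernel of
the symbol `∑ α, k(e_α) A α`. The exponent `k(x) = i(x³+x⁴)/2` does not involve `x¹, x²` and
is symmetric in `x³, x⁴`; hence the symbols are `(i/2)(σ³ + σ⁴) = diag(i, 0)`, which kills
`(0, i)ᵀ`, and `(i/2)(σ̃³ + σ̃⁴) = diag(0, i)`, which kills `(1, 0)ᵀ`. -/

section PlaneWave

open scoped Matrix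

variable {𝕜 E ι m n : Type*} [NontriviallyNormedField 𝕜] [NormedAlgebra 𝕜 ℂ]
  [NormedAddCommGroup E] [NormedSpace 𝕜 E]

/-- The plane wave `x ↦ e^{k(x)} u` with constant polarisation `u`. The factor `i` is part of the
exponent `k`. -/
noncomputable def planeWave (k : E →L[𝕜] ℂ) (u : n → ℂ) (x : E) : n → ℂ :=
  cexp (k x) • u

@[simp]
lemma planeWave_zero (k : E →L[𝕜] ℂ) : planeWave k (0 : n → ℂ) = 0 := by
  ext x c
  simp [planeWave]

lemma fderiv_planeWave_apply (k : E →L[𝕜] ℂ) (u : n → ℂ) (c : n) (x v : E) :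
    fderiv 𝕜 (fun y => planeWave k u y c) x v = k v * planeWave k u x c := by
  have h : HasFDerivAt (fun y => planeWave k u y c) (u c • cexp (k x) • k) x :=
    k.hasFDerivAt.cexp.mul_const (u c)
  rw [h.fderiv]
  simp only [planeWave, smul_apply, Pi.smul_apply, smul_eq_mul]
  ring

variable [Fintype ι] [Fintype n]

variable (𝕜) in
/-- The first-order differential operator `∑ α, A α ∂_{e α}` with constant matrix coefficients,
acting on vector-valued fields; the Dirac operators are the case where the `A α` are Pauli matrices
and the `e α` the standard basis. Derivatives are taken componentwise. -/
noncomputable def firstOrderOp (A : ι → Matrix m n ℂ) (e : ι → E) (f : E → n → ℂ) (x : E) :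
    m → ℂ :=
  fun b => ∑ α, ∑ c, A α b c * fderiv 𝕜 (fun y => f y c) x (e α)

/-- The symbol `∑ α, k(e α) A α` of the operator `∑ α, A α ∂_{e α}` at the covector `k`. -/
noncomputable def firstOrderSymbol (A : ι → Matrix m n ℂ) (e : ι → E) (k : E →L[𝕜] ℂ) :
    Matrix m n ℂ :=
  ∑ α, k (e α) • A α

lemma firstOrderOp_planeWave (A : ι → Matrix m n ℂ) (e : ι → E) (k : E →L[𝕜] ℂ) (u : n → ℂ) :
    firstOrderOp 𝕜 A e (planeWave k u) = planeWave k (firstOrderSymbol A e k *ᵥ u) := by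
  ext x b
  calc firstOrderOp 𝕜 A e (planeWave k u) x b
      = ∑ α, ∑ c, A α b c * (k (e α) * planeWave k u x c) := by
        simp only [firstOrderOp, fderiv_planeWave_apply]
    _ = cexp (k x) * ∑ α, k (e α) * ∑ c, A α b c * u c := by
        simp only [planeWave, Pi.smul_apply, smul_eq_mul, Finset.mul_sum]
        exact Finset.sum_congr rfl fun α _ => Finset.sum_congr rfl fun c _ => by ring
    _ = planeWave k (firstOrderSymbol A e k *ᵥ u) x b := by
        simp only [planeWave, firstOrderSymbol, Matrix.sum_mulVec, Matrix.smul_mulVec,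
          Finset.sum_apply, Pi.smul_apply, smul_eq_mul, Matrix.mulVec, dotProduct]

end PlaneWave

section NullPhase

open scoped Matrix

variable {m n : Type*}

/-- The exponent `i(x³+x⁴)/2` of the massless solutions. Coordinates are indexed from `0`, so
`x³, x⁴` are `x 2, x 3`. -/
noncomputable def nullPhase : (Fin 4 → ℝ) →L[ℝ] ℂ :=
  (I / 2) • ofRealCLM.comp (.proj 2 + .proj 3)

lemma nullPhase_apply (x : Fin 4 → ℝ) : nullPhase x = I * (x 2 + x 3) / 2 := by
  simp only [nullPhase, smul_apply, ContinuousLinearMap.comp_apply, add_apply,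
    ContinuousLinearMap.proj_apply, ofRealCLM_apply, ofReal_add, smul_eq_mul]
  ring

lemma eq_planeWave_nullPhase {f : (Fin 4 → ℝ) → n → ℂ} {r : ℂ} {u : n → ℂ}
    (hf : ∀ x b, f x b = r * u b * cexp (I * (x 2 + x 3) / 2)) :
    f = planeWave nullPhase (r • u) := by
  ext x b
  simp only [hf, planeWave, nullPhase_apply, Pi.smul_apply, smul_eq_mul]
  ring

lemma firstOrderSymbol_nullPhase (A : Fin 4 → Matrix m n ℂ) :
    firstOrderSymbol A (fun α => Pi.single α 1) nullPhase = (I / 2) • (A 2 + A 3) := by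
  simp [firstOrderSymbol, nullPhase_apply, Fin.sum_univ_four, Pi.single_apply]

lemma firstOrderOp_planeWave_nullPhase_eq_zero [Fintype n] {A : Fin 4 → Matrix m n ℂ}
    {u : n → ℂ} (hu : (A 2 + A 3) *ᵥ u = 0) (r : ℂ) :
    firstOrderOp ℝ A (fun α => Pi.single α 1) (planeWave nullPhase (r • u)) = 0 := by
  rw [firstOrderOp_planeWave, firstOrderSymbol_nullPhase, Matrix.smul_mulVec, Matrix.mulVec_smul,
    hu, smul_zero, smul_zero, planeWave_zero]

end NullPhase

/-- The Weyl spinor fields `ξ(x) = √(a/2)(0,i)ᵀ e^{i(x³+x⁴)/2}` and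
`η(x) = √(a/2)(1,0)ᵀ e^{i(x³+x⁴)/2}` associated with the left-handed and right-handed
massless solutions satisfy the massless Dirac equations `Σ_α σ^α ∂_α ξ = 0` and
`Σ_α σ̃^α ∂_α η = 0`, where `σ^α` and `σ̃^α` are the covariant and contravariant Pauli
matrices. -/
theorem massless_dirac_equations
    (a : ℝ) (ha : 0 < a)
    (σ : Fin 4 → Matrix (Fin 2) (Fin 2) ℂ)
    (hσ : σ = ![!![0, 1; 1, 0], !![0, -I; I, 0], !![1, 0; 0, -1], !![1, 0; 0, 1]])
    (σt : Fin 4 → Matrix (Fin 2) (Fin 2) ℂ)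
    (hσt : σt = ![!![0, -1; -1, 0], !![0, -I; I, 0], !![-1, 0; 0, 1], !![1, 0; 0, 1]])
    (ξ : (Fin 4 → ℝ) → Fin 2 → ℂ)
    (hξ : ∀ (x : Fin 4 → ℝ) (b : Fin 2),
      ξ x b = (Real.sqrt (a / 2) : ℂ) * (![0, I] b) * Complex.exp (I * (x 2 + x 3) / 2))
    (η : (Fin 4 → ℝ) → Fin 2 → ℂ)
    (hη : ∀ (x : Fin 4 → ℝ) (b : Fin 2),
      η x b = (Real.sqrt (a / 2) : ℂ) * (![1, 0] b) * Complex.exp (I * (x 2 + x 3) / 2)) :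
    (∀ (x : Fin 4 → ℝ) (b : Fin 2),
      ∑ α, ∑ c, σ α b c * fderiv ℝ (fun y => ξ y c) x (Pi.single α 1) = 0) ∧
    (∀ (x : Fin 4 → ℝ) (b : Fin 2),
      ∑ α, ∑ c, σt α b c * fderiv ℝ (fun y => η y c) x (Pi.single α 1) = 0) := by
  have σ_mulVec : (σ 2 + σ 3).mulVec ![0, I] = 0 := by
    ext b
    fin_cases b <;> simp [hσ]
  have σt_mulVec : (σt 2 + σt 3).mulVec ![1, 0] = 0 := by
    ext b
    fin_cases b <;> simp [hσt]
  obtain rfl := eq_planeWave_nullPhase hξ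
  obtain rfl := eq_planeWave_nullPhase hη
  exact ⟨congrFun₂ (firstOrderOp_planeWave_nullPhase_eq_zero σ_mulVec _),
    congrFun₂ (firstOrderOp_planeWave_nullPhase_eq_zero σt_mulVec _)⟩
end
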